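/- arXiv:1806.00382 — 4 statements merged into one kernel-verified Lean document; each statement's English description precedes it below -/
import Mathlib

section
/- Let 1 ≤ p < ∞. For every finitely supported sequence of reals (a_j)_{j≥1} one has ∑_{n=1}^∞ sup_{j≥n} |a_j|^p/j ≤ 2·∑_{n=1}^∞ (max_{2^{n-1} ≤ j ≤ 2^n − 1} |a_j|)^p and ∑_{n=1}^∞ (max_{2^{n-1} ≤ j ≤ 2^n − 1} |a_j|)^p ≤ 72·∑_{n=1}^∞ sup_{j≥n} |a_j|^p/j. Equivalently, the canonical normalized basis (f_k) of the p-th Tandori sequence space is 2^{1/p}-dominated by, and 72^{1/p}-dominates, the canonical basis of (⊕_{n=1}^∞ ℓ_∞^{2^{n-1}})_{ℓ_p}; in particular these two spaces are isomorphic. -/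
/-!
Put `u j = |a_j|^p` and work in `ℝ≥0∞`, where no summability is needed. Write
`T n = sup_{j ≥ n} u j / j`, which is antitone in `n`, and `M l = max_{2^l ≤ j < 2^(l+1)} u j`.

Upper bound: an index `j > n` in block `l` satisfies `n < 2^(l+1)` and `u j / j ≤ M l / 2^l`, so
`T (n+1) ≤ ∑_l [n < 2^(l+1)] M l / 2^l`. Summing over `n ≥ 0` and exchanging the sums counts each
`M l / 2^l` exactly `2^(l+1)` times, whence the factor `2`.

Lower bound: the indices in block `l` are less than `2^(l+1)`, so `M l ≤ 2^(l+1) T (2^l)`, and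
Cauchy condensation for `T` gives `∑_l M l ≤ 4 ∑_{n ≥ 1} T n`.
-/

open scoped ENNReal

/-- The tail supremum `sup_{j ≥ n} u j / j`, whose sum over `n ≥ 1` is the `p`-th power of the
Tandori norm of `∑ a_j f_j` when `u j = |a_j|^p`. Only `n ≥ 1` is meaningful, since `u 0 / 0 = ∞`
if `u 0 ≠ 0`. -/
noncomputable def tandoriTail (u : ℕ → ℝ≥0∞) (n : ℕ) : ℝ≥0∞ :=
  ⨆ j ≥ n, u j / j

/-- The maximum of `u` over the dyadic block `2^n ≤ j ≤ 2^(n+1) - 1`, whose sum over `n` is the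
`p`-th power of the norm of `a` in the `ℓ_p`-sum of the spaces `ℓ_∞^{2^n}` when `u j = |a_j|^p`. -/
noncomputable def dyadicBlockSup (u : ℕ → ℝ≥0∞) (n : ℕ) : ℝ≥0∞ :=
  (Finset.Icc (2 ^ n) (2 ^ (n + 1) - 1)).sup u

section DyadicComparison

variable (u : ℕ → ℝ≥0∞)

lemma div_le_tandoriTail {n j : ℕ} (h : n ≤ j) : u j / j ≤ tandoriTail u n :=
  le_iSup₂ (f := fun j (_ : j ≥ n) => u j / j) j h

lemma tandoriTail_antitone : Antitone (tandoriTail u) := fun _ _ h =>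
  iSup₂_le fun _ hj => div_le_tandoriTail u (h.trans hj)

lemma le_dyadicBlockSup_log {j : ℕ} (hj : j ≠ 0) : u j ≤ dyadicBlockSup u (Nat.log 2 j) :=
  Finset.le_sup <| Finset.mem_Icc.2
    ⟨Nat.pow_log_le_self 2 hj, Nat.le_sub_one_of_lt (Nat.lt_pow_succ_log_self one_lt_two j)⟩

lemma tandoriTail_succ_le_tsum (n : ℕ) :
    tandoriTail u (n + 1) ≤
      ∑' l, if n < 2 ^ (l + 1) then dyadicBlockSup u l / 2 ^ l else 0 := by
  refine iSup₂_le fun j hj => ?_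
  have hj0 : j ≠ 0 := by lia
  have hn : n < 2 ^ (Nat.log 2 j + 1) :=
    (Nat.lt_of_succ_le hj).trans (Nat.lt_pow_succ_log_self one_lt_two j)
  calc
    u j / j ≤ dyadicBlockSup u (Nat.log 2 j) / 2 ^ Nat.log 2 j :=
      ENNReal.div_le_div (le_dyadicBlockSup_log u hj0) (by exact_mod_cast Nat.pow_log_le_self 2 hj0)
    _ = if n < 2 ^ (Nat.log 2 j + 1)
        then dyadicBlockSup u (Nat.log 2 j) / 2 ^ Nat.log 2 j else 0 := (if_pos hn).symm
    _ ≤ ∑' l, if n < 2 ^ (l + 1) then dyadicBlockSup u l / 2 ^ l else 0 :=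
      ENNReal.le_tsum (f := fun l => if n < 2 ^ (l + 1) then dyadicBlockSup u l / 2 ^ l else 0) _

lemma tsum_ite_lt (N : ℕ) (c : ℝ≥0∞) : ∑' n : ℕ, (if n < N then c else 0) = N * c := by
  rw [tsum_eq_sum (s := Finset.range N) fun n hn => if_neg (by simpa using hn),
    Finset.sum_congr rfl fun n hn => if_pos (Finset.mem_range.1 hn)]
  simp

theorem tsum_tandoriTail_succ_le :
    ∑' n, tandoriTail u (n + 1) ≤ 2 * ∑' l, dyadicBlockSup u l :=
  calc
    ∑' n, tandoriTail u (n + 1)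
      ≤ ∑' n, ∑' l, if n < 2 ^ (l + 1) then dyadicBlockSup u l / 2 ^ l else 0 :=
        ENNReal.tsum_le_tsum (tandoriTail_succ_le_tsum u)
    _ = ∑' l, ∑' n, if n < 2 ^ (l + 1) then dyadicBlockSup u l / 2 ^ l else 0 := ENNReal.tsum_comm
    _ = ∑' l, 2 * dyadicBlockSup u l := by
        congr! 2 with l
        rw [tsum_ite_lt, pow_succ', Nat.cast_mul, mul_assoc, Nat.cast_pow, Nat.cast_ofNat,
          ENNReal.mul_div_cancel (by simp) (by simp)]
    _ = 2 * ∑' l, dyadicBlockSup u l := ENNReal.tsum_mul_left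

lemma dyadicBlockSup_le_mul_tandoriTail (n : ℕ) :
    dyadicBlockSup u n ≤ 2 ^ (n + 1) * tandoriTail u (2 ^ n) := by
  refine Finset.sup_le fun j hj => ?_
  obtain ⟨hnj, hjn⟩ := Finset.mem_Icc.1 hj
  have hj0 : (j : ℝ≥0∞) ≠ 0 := by exact_mod_cast ((Nat.two_pow_pos n).trans_le hnj).ne'
  calc
    u j = j * (u j / j) := (ENNReal.mul_div_cancel hj0 (ENNReal.natCast_ne_top j)).symm
    _ ≤ 2 ^ (n + 1) * tandoriTail u (2 ^ n) := by
        gcongr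
        · exact_mod_cast hjn.trans (Nat.sub_le _ _)
        · exact div_le_tandoriTail u hnj

lemma tsum_two_pow_mul_le_of_antitone {f : ℕ → ℝ≥0∞} (hf : Antitone f) :
    ∑' k, 2 ^ k * f (2 ^ (k + 1)) ≤ ∑' k, f (k + 2) := by
  refine ENNReal.tsum_le_of_sum_range_le fun n => ?_
  calc
    ∑ k ∈ Finset.range n, 2 ^ k * f (2 ^ (k + 1)) ≤ ∑ k ∈ Finset.Ico 2 (2 ^ n + 1), f k := by
        simpa using Finset.sum_condensed_le' (fun _ _ _ h => hf h) n
    _ = ∑ k ∈ Finset.range (2 ^ n + 1 - 2), f (k + 2) := by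
        simp only [Finset.sum_Ico_eq_sum_range, add_comm]
    _ ≤ ∑' k, f (k + 2) := ENNReal.sum_le_tsum _

theorem tsum_dyadicBlockSup_le :
    ∑' l, dyadicBlockSup u l ≤ 4 * ∑' n, tandoriTail u (n + 1) :=
  calc
    ∑' l, dyadicBlockSup u l ≤ ∑' l, 2 ^ (l + 1) * tandoriTail u (2 ^ l) :=
        ENNReal.tsum_le_tsum (dyadicBlockSup_le_mul_tandoriTail u)
    _ = 2 * tandoriTail u 1 + 4 * ∑' l, 2 ^ l * tandoriTail u (2 ^ (l + 1)) := by
        rw [tsum_eq_zero_add' ENNReal.summable, ← ENNReal.tsum_mul_left]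
        congr! 3 <;> ring
    _ ≤ 4 * tandoriTail u 1 + 4 * ∑' n, tandoriTail u (n + 2) := by
        refine add_le_add (by gcongr; norm_num) (mul_le_mul_right ?_ 4)
        exact tsum_two_pow_mul_le_of_antitone (tandoriTail_antitone u)
    _ = 4 * ∑' n, tandoriTail u (n + 1) := by
        rw [tsum_eq_zero_add' (f := fun n => tandoriTail u (n + 1)) ENNReal.summable, mul_add]

lemma toReal_tandoriTail {u : ℕ → ℝ≥0∞} (hu : ∀ j, u j ≠ ∞) {n : ℕ} (hn : n ≠ 0) :
    (tandoriTail u n).toReal = ⨆ j : {j : ℕ // n ≤ j}, (u j).toReal / j := by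
  have hfin (j : {j : ℕ // n ≤ j}) : u j / j ≠ ∞ :=
    ENNReal.div_ne_top (hu j) (by have := j.2; exact_mod_cast (by lia : (j : ℕ) ≠ 0))
  simp only [tandoriTail, ge_iff_le, iSup_subtype', ENNReal.toReal_iSup hfin, ENNReal.toReal_div,
    ENNReal.toReal_natCast]

lemma dyadicBlockSup_ne_top {u : ℕ → ℝ≥0∞} (hu : ∀ j, u j ≠ ∞) (n : ℕ) :
    dyadicBlockSup u n ≠ ∞ :=
  ((Finset.sup_lt_iff ENNReal.zero_lt_top).2 fun j _ => (hu j).lt_top).ne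

end DyadicComparison

section RealSequences

variable {p : ℝ} (a : ℕ → ℝ)

lemma toReal_tandoriTail_enorm_rpow (hp : 0 ≤ p) (n : ℕ) :
    (tandoriTail (fun j => ‖a j‖ₑ ^ p) (n + 1)).toReal =
      ⨆ j : {j : ℕ // n + 1 ≤ j}, |a j| ^ p / j := by
  rw [toReal_tandoriTail (fun j => ENNReal.rpow_ne_top_of_nonneg hp enorm_ne_top) n.succ_ne_zero]
  simp only [← ENNReal.toReal_rpow, toReal_enorm, Real.norm_eq_abs]

lemma toReal_dyadicBlockSup_enorm_rpow (hp : 0 < p) (n : ℕ) :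
    (dyadicBlockSup (fun j => ‖a j‖ₑ ^ p) n).toReal =
      (⨆ j : {j : ℕ // 2 ^ n ≤ j ∧ j ≤ 2 ^ (n + 1) - 1}, |a j|) ^ p := by
  have h : dyadicBlockSup (fun j => ‖a j‖ₑ ^ p) n =
      (⨆ j : {j : ℕ // 2 ^ n ≤ j ∧ j ≤ 2 ^ (n + 1) - 1}, ‖a j‖ₑ) ^ p := by
    simp only [dyadicBlockSup, Finset.sup_eq_iSup, Finset.mem_Icc, iSup_subtype']
    exact ((ENNReal.orderIsoRpow p hp).map_iSup
      fun j : {j : ℕ // 2 ^ n ≤ j ∧ j ≤ 2 ^ (n + 1) - 1} => ‖a j‖ₑ).symm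
  rw [h, ← ENNReal.toReal_rpow, ENNReal.toReal_iSup fun _ => enorm_ne_top]
  simp only [toReal_enorm, Real.norm_eq_abs]

theorem stmt_0_general (hp : 0 < p)
    (ha : Summable fun n : ℕ =>
      (⨆ j : {j : ℕ // 2 ^ n ≤ j ∧ j ≤ 2 ^ (n + 1) - 1}, |a j.1|) ^ p) :
    (Summable fun n : ℕ => ⨆ j : {j : ℕ // n + 1 ≤ j}, |a j.1| ^ p / (j.1 : ℝ)) ∧
    (∑' n : ℕ, ⨆ j : {j : ℕ // n + 1 ≤ j}, |a j.1| ^ p / (j.1 : ℝ)) ≤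
      2 * ∑' n : ℕ, (⨆ j : {j : ℕ // 2 ^ n ≤ j ∧ j ≤ 2 ^ (n + 1) - 1}, |a j.1|) ^ p ∧
    (∑' n : ℕ, (⨆ j : {j : ℕ // 2 ^ n ≤ j ∧ j ≤ 2 ^ (n + 1) - 1}, |a j.1|) ^ p) ≤
      4 * ∑' n : ℕ, ⨆ j : {j : ℕ // n + 1 ≤ j}, |a j.1| ^ p / (j.1 : ℝ) := by
  simp only [← toReal_tandoriTail_enorm_rpow a hp.le, ← toReal_dyadicBlockSup_enorm_rpow a hp]
    at ha ⊢
  set u : ℕ → ℝ≥0∞ := fun j => ‖a j‖ₑ ^ p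
  have hu (j : ℕ) : u j ≠ ∞ := ENNReal.rpow_ne_top_of_nonneg hp.le enorm_ne_top
  have hM : ∑' n, dyadicBlockSup u n ≠ ∞ := by
    simpa only [ENNReal.ofReal_toReal (dyadicBlockSup_ne_top hu _)] using ha.tsum_ofReal_ne_top
  have hT : ∑' n, tandoriTail u (n + 1) ≠ ∞ :=
    ne_top_of_le_ne_top (ENNReal.mul_ne_top ENNReal.ofNat_ne_top hM) (tsum_tandoriTail_succ_le u)
  rw [← ENNReal.tsum_toReal_eq (ENNReal.ne_top_of_tsum_ne_top hM),
    ← ENNReal.tsum_toReal_eq (ENNReal.ne_top_of_tsum_ne_top hT)]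
  refine ⟨ENNReal.summable_toReal hT, ?_, ?_⟩
  · simpa using ENNReal.toReal_mono (ENNReal.mul_ne_top ENNReal.ofNat_ne_top hM)
      (tsum_tandoriTail_succ_le u)
  · simpa using ENNReal.toReal_mono (ENNReal.mul_ne_top ENNReal.ofNat_ne_top hT)
      (tsum_dyadicBlockSup_le u)

lemma summable_iSup_dyadicBlock_rpow (hp : p ≠ 0) (ha : (Function.support a).Finite) :
    Summable fun n : ℕ => (⨆ j : {j : ℕ // 2 ^ n ≤ j ∧ j ≤ 2 ^ (n + 1) - 1}, |a j.1|) ^ p := by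
  obtain ⟨N, hN⟩ := ha.bddAbove
  refine summable_of_ne_finset_zero (s := Finset.range (N + 1)) fun n hn => ?_
  have hzero (j : {j : ℕ // 2 ^ n ≤ j ∧ j ≤ 2 ^ (n + 1) - 1}) : |a j| = 0 := by
    by_contra hj
    have hjN : j.1 ≤ N := hN (abs_ne_zero.1 hj)
    have := n.lt_two_pow_self
    grind
  simp only [hzero, Real.iSup_const_zero, Real.zero_rpow hp]

end RealSequences

/-- Let `1 ≤ p < ∞`.  For every finitely supported real sequence
`(a_j)_{j ≥ 1}` (here `a : ℕ → ℝ`, with only the values `a j` for `j ≥ 1` playing a role)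
one has
`∑_{n=1}^∞ sup_{j ≥ n} |a_j|^p / j ≤ 2 · ∑_{n=1}^∞ (max_{2^{n-1} ≤ j ≤ 2^n - 1} |a_j|)^p`
and
`∑_{n=1}^∞ (max_{2^{n-1} ≤ j ≤ 2^n - 1} |a_j|)^p ≤ 72 · ∑_{n=1}^∞ sup_{j ≥ n} |a_j|^p / j`.
(The outer sums are written with `n : ℕ` running over `0, 1, 2, …`, representing the
paper's index `n + 1 = 1, 2, 3, …`; thus `sup_{j ≥ n}` becomes the supremum over the
subtype `{j // n + 1 ≤ j}`, and the paper's block `2^{n-1} ≤ j ≤ 2^n - 1` becomes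
`2^n ≤ j ≤ 2^(n+1) - 1`.)  This says that the canonical normalized basis of the `p`-th
Tandori sequence space is `2^{1/p}`-dominated by, and `72^{1/p}`-dominates, the canonical
basis of `(⊕_{n=1}^∞ ℓ_∞^{2^{n-1}})_{ℓ_p}`; in particular these spaces are isomorphic. -/
theorem stmt_0 (p : ℝ) (hp : 1 ≤ p) (a : ℕ → ℝ)
    (ha : (Function.support a).Finite) :
    (∑' n : ℕ, ⨆ j : {j : ℕ // n + 1 ≤ j}, |a j.1| ^ p / (j.1 : ℝ)) ≤
      2 * ∑' n : ℕ, (⨆ j : {j : ℕ // 2 ^ n ≤ j ∧ j ≤ 2 ^ (n + 1) - 1}, |a j.1|) ^ p ∧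
    (∑' n : ℕ, (⨆ j : {j : ℕ // 2 ^ n ≤ j ∧ j ≤ 2 ^ (n + 1) - 1}, |a j.1|) ^ p) ≤
      72 * ∑' n : ℕ, ⨆ j : {j : ℕ // n + 1 ≤ j}, |a j.1| ^ p / (j.1 : ℝ) := by
  have hp0 : 0 < p := zero_lt_one.trans_le hp
  obtain ⟨-, hle, hge⟩ := stmt_0_general a hp0 (summable_iSup_dyadicBlock_rpow a hp0.ne' ha)
  refine ⟨hle, hge.trans (mul_le_mul_of_nonneg_right (by norm_num) ?_)⟩
  exact tsum_nonneg fun n => Real.iSup_nonneg fun j => by positivity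
end

section
/- Let 1 ≤ p < ∞ and let w ∈ 𝒲 satisfy condition (NUC). Then there exist a constant C ≥ 1, pairwise disjoint nonempty finite sets A_{k,i} ⊂ ℕ (k ≥ 1, 1 ≤ i ≤ k) and positive reals c_k (k ≥ 1) such that for every finitely supported family of reals (a_{k,i})_{k≥1, 1≤i≤k}, the sequence b = (b_j)_{j≥1} defined by b_j = a_{k,i}/c_k if j ∈ A_{k,i} and b_j = 0 otherwise, satisfies C^{-1}·(∑_{k=1}^∞ max_{1≤i≤k}|a_{k,i}|^p)^{1/p} ≤ ‖b‖_{d(w,p)} ≤ C·(∑_{k=1}^∞ max_{1≤i≤k}|a_{k,i}|^p)^{1/p}. That is, the Lorentz sequence space d(w,p) contains a constant-coefficient block-basic copy of W_p = (⊕_{k=1}^∞ ℓ_∞^k)_{ℓ_p}. -/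
/-- The Lorentz norm `‖b‖_{d(w,p)} = sup_σ (∑_n |b_{σ(n)}|^p w_n)^{1/p}` of a (finitely
supported) real sequence `b`, the supremum taken over all permutations `σ` of `ℕ`
(everything `0`-indexed). -/
noncomputable def lorentzNorm (w : ℕ → ℝ) (p : ℝ) (b : ℕ → ℝ) : ℝ :=
  ⨆ σ : Equiv.Perm ℕ, (∑' n : ℕ, |b (σ n)| ^ p * w n) ^ (1 / p)

/-- The norm of the canonical-basis expansion `(a_{k,i})_{k ≥ 1, 1 ≤ i ≤ k}` in
`W_p = (⊕_{k=1}^∞ ℓ_∞^k)_{ℓ_p}`, namely `(∑_k max_{1 ≤ i ≤ k} |a_{k,i}|^p)^{1/p}`. -/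
noncomputable def WpNorm (p : ℝ) (a : ℕ × ℕ → ℝ) : ℝ :=
  (∑' k : ℕ, (⨆ i : {i : ℕ // 1 ≤ i ∧ i ≤ k}, |a (k, i.1)|) ^ p) ^ (1 / p)

/-!
Write `W n = ∑ i ∈ range n, w i`. No ratio `W (2n) / W n` equals `1`, so (NUC) makes it arbitrarily
close to `1` for infinitely many `n`. As `w` is antitone, `W ((k + 1) n) ≤ W n + k (W (2n) - W n)`,
so for each `k` and `θ > 1` there are arbitrarily large `n` with `W (k n) ≤ θ W n`; and `W n → ∞`
makes the weight of any `n` consecutive positions starting at a prescribed place at least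
`θ⁻¹ W n` once `n` is large. Choose lengths `n k` recursively with both properties, the prescribed
place being `∑ j < k, n j`.

Let the `A (k, i)` be any pairwise disjoint sets of cardinality `n k`, and let `c k ^ p = W (n k)`.
Since the Lorentz norm is rearrangement invariant, their position in `ℕ` does not matter. The sets
of index `k` occupy `k * n k` positions, of total weight at most `θ W (n k)` under any permutation:
this is the upper estimate. Conversely, a permutation which moves, for each `k`, the set
`A (k, i)` with `|a (k, i)|` maximal to the positions `[∑ j < k, n j, ∑ j ≤ k, n j)` gives it a
weight of at least `θ⁻¹ W (n k)`. The constant is therefore `θ ^ (1 / p)`, as close to `1` as we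
please.
-/

section Rearrangement

open Finset Function

variable {κ α : Type*}

lemma exists_perm_forall_apply_mem {s : Finset κ} {P D : κ → Finset α}
    (hP : (s : Set κ).PairwiseDisjoint P) (hD : (s : Set κ).PairwiseDisjoint D)
    (hcard : ∀ k ∈ s, #(P k) = #(D k)) :
    ∃ σ : Equiv.Perm α, ∀ k ∈ s, ∀ x ∈ P k, σ x ∈ D k := by
  let e (k : s) : P k ≃ D k := equivOfCardEq (hcard k k.2)
  have inj_of_disjoint {E : κ → Finset α} (hE : (s : Set κ).PairwiseDisjoint E) :
      Injective fun t : Σ k : s, E k => (t.2 : α) := by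
    rintro ⟨k, x⟩ ⟨l, y⟩ hxy
    replace hxy : (x : α) = y := hxy
    obtain rfl : k = l := Subtype.ext (hE.elim_finset k.2 l.2 x x.2 (hxy ▸ y.2))
    rw [Subtype.ext hxy]
  obtain ⟨σ, hσ⟩ := Equiv.Perm.exists_extending_pair
    (fun t : Σ k : s, P k => (t.2 : α)) (fun t => (e t.1 t.2 : α)) (inj_of_disjoint hP)
    ((inj_of_disjoint hD).comp (Equiv.sigmaCongrRight e).injective)
  exact ⟨σ, fun k hk x hx => hσ ⟨⟨k, hk⟩, ⟨x, hx⟩⟩ ▸ (e ⟨k, hk⟩ ⟨x, hx⟩).2⟩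

lemma exists_pairwise_disjoint_card_eq [Countable κ] (n : κ → ℕ) :
    ∃ A : κ → Finset ℕ, Pairwise (Disjoint on A) ∧ ∀ k, #(A k) = n k := by
  obtain ⟨e, he⟩ := exists_injective_nat κ
  refine ⟨fun k => (range (n k)).image (Nat.pair (e k)), fun k l hkl => ?_, fun k => ?_⟩
  · simp only [onFun, disjoint_left, mem_image, not_exists, not_and]
    rintro _ ⟨i, -, rfl⟩ j - hij
    exact hkl (he (Nat.pair_eq_pair.1 hij).1.symm)
  · rw [card_image_of_injective _ fun i j hij => (Nat.pair_eq_pair.1 hij).2, card_range]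

lemma sum_le_sum_range_card_of_antitone {M : Type*} [AddCommMonoid M] [PartialOrder M]
    [IsOrderedAddMonoid M] {w : ℕ → M} (hw : Antitone w) (S : Finset ℕ) :
    ∑ i ∈ S, w i ≤ ∑ i ∈ range #S, w i := by
  induction S using Finset.induction_on_max with
  | empty => rfl
  | insert m S hm ih =>
    have hmS : m ∉ S := fun h => lt_irrefl m (hm m h)
    have hcard : #S ≤ m := by
      simpa only [card_range] using card_le_card fun x hx => mem_range.2 (hm x hx)
    rw [sum_insert hmS, card_insert_of_notMem hmS, sum_range_succ, add_comm]
    exact add_le_add ih (hw hcard)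

variable {w f : ℕ → ℝ} {s : Finset κ} {u : κ → ℝ}

lemma tsum_comp_perm_mul_le (hw : Antitone w) (hw0 : ∀ i, 0 ≤ w i) {B : κ → Finset ℕ}
    (hB : (s : Set κ).PairwiseDisjoint B) (hu : ∀ k ∈ s, 0 ≤ u k)
    (hfu : ∀ k ∈ s, ∀ j ∈ B k, f j ≤ u k) (hf : ∀ j, (∀ k ∈ s, j ∉ B k) → f j = 0)
    (σ : Equiv.Perm ℕ) :
    ∑' j, f (σ j) * w j ≤ ∑ k ∈ s, u k * ∑ i ∈ range #(B k), w i := by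
  have hweight (k : κ) : ∑ j ∈ B k, w (σ.symm j) ≤ ∑ i ∈ range #(B k), w i := by
    simpa only [sum_map, card_map, Equiv.coe_toEmbedding] using
      sum_le_sum_range_card_of_antitone hw ((B k).map σ.symm.toEmbedding)
  calc ∑' j, f (σ j) * w j = ∑' j, f j * w (σ.symm j) := by
        simp only [← σ.tsum_eq fun j => f j * w (σ.symm j), Equiv.symm_apply_apply]
    _ = ∑ j ∈ s.biUnion B, f j * w (σ.symm j) := tsum_eq_sum fun j hj => by
        rw [hf j fun k hk hjk => hj (mem_biUnion.2 ⟨k, hk, hjk⟩), zero_mul]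
    _ = ∑ k ∈ s, ∑ j ∈ B k, f j * w (σ.symm j) := sum_biUnion hB
    _ ≤ ∑ k ∈ s, u k * ∑ j ∈ B k, w (σ.symm j) := sum_le_sum fun k hk => by
        rw [mul_sum]
        exact sum_le_sum fun j hj => mul_le_mul_of_nonneg_right (hfu k hk j hj) (hw0 _)
    _ ≤ ∑ k ∈ s, u k * ∑ i ∈ range #(B k), w i :=
        sum_le_sum fun k hk => mul_le_mul_of_nonneg_left (hweight k) (hu k hk)

lemma exists_perm_sum_mul_le_tsum (hw0 : ∀ i, 0 ≤ w i) (hf0 : ∀ j, 0 ≤ f j)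
    (hf : f.support.Finite) {P D : κ → Finset ℕ} (hP : (s : Set κ).PairwiseDisjoint P)
    (hD : (s : Set κ).PairwiseDisjoint D) (hcard : ∀ k ∈ s, #(P k) = #(D k))
    (huf : ∀ k ∈ s, ∀ j ∈ D k, u k ≤ f j) :
    ∃ σ : Equiv.Perm ℕ, ∑ k ∈ s, u k * ∑ j ∈ P k, w j ≤ ∑' j, f (σ j) * w j := by
  obtain ⟨σ, hσ⟩ := exists_perm_forall_apply_mem hP hD hcard
  have hsum : Summable fun j => f (σ j) * w j := by
    refine summable_of_hasFiniteSupport ((hf.preimage σ.injective.injOn).subset fun j hj => ?_)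
    exact left_ne_zero_of_mul hj
  refine ⟨σ, ?_⟩
  calc ∑ k ∈ s, u k * ∑ j ∈ P k, w j ≤ ∑ k ∈ s, ∑ j ∈ P k, f (σ j) * w j :=
        sum_le_sum fun k hk => by
          rw [mul_sum]
          exact sum_le_sum fun j hj =>
            mul_le_mul_of_nonneg_right (huf k hk _ (hσ k hk j hj)) (hw0 j)
    _ = ∑ j ∈ s.biUnion P, f (σ j) * w j := (sum_biUnion hP).symm
    _ ≤ ∑' j, f (σ j) * w j := hsum.sum_le_tsum _ fun j _ => mul_nonneg (hf0 _) (hw0 j)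

end Rearrangement

section BlockLengths

open Finset Filter

lemma infinite_setOf_lt_of_forall_iInf_lt {ι α : Type*} [Nonempty ι]
    [ConditionallyCompleteLinearOrder α] {f : ι → α} (hf : ∀ i, iInf f < f i) {b : α}
    (hb : iInf f < b) : {i | f i < b}.Infinite := by
  intro hfin
  obtain ⟨i, hib, hmin⟩ := Set.exists_min_image _ f hfin (exists_lt_of_ciInf_lt hb)
  have hle (j : ι) : f i ≤ f j := by
    rcases lt_or_ge (f j) b with hjb | hbj
    · exact hmin j hjb
    · exact (lt_of_lt_of_le hib hbj).le
  exact (hf i).not_ge (le_ciInf hle)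

lemma exists_seq_of_forall_sum_range {M : Type*} [AddCommMonoid M] {r : ℕ → M → M → Prop}
    (hr : ∀ k x, ∃ y, r k x y) : ∃ n : ℕ → M, ∀ k, r k (∑ j ∈ range k, n j) (n k) := by
  choose next hnext using hr
  let S : ℕ → M := Nat.rec 0 fun k x => x + next k x
  have hS (k : ℕ) : ∑ j ∈ range k, next j (S j) = S k := by
    induction k with
    | zero => rfl
    | succ k ih => rw [sum_range_succ, ih]
  exact ⟨fun k => next k (S k), fun k => hS k ▸ hnext k (S k)⟩

lemma sum_range_succ_mul_le_of_antitone {w : ℕ → ℝ} (hw : Antitone w) (n k : ℕ) :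
    ∑ i ∈ range ((k + 1) * n), w i ≤
      ∑ i ∈ range n, w i + k * (∑ i ∈ range (2 * n), w i - ∑ i ∈ range n, w i) := by
  induction k with
  | zero => simp
  | succ k ih =>
    have hshift : ∑ i ∈ range n, w ((k + 1) * n + i) ≤ ∑ i ∈ range n, w (n + i) :=
      sum_le_sum fun i _ => hw (Nat.add_le_add_right (Nat.le_mul_of_pos_left n k.succ_pos) i)
    rw [add_mul (k + 1), one_mul, sum_range_add]
    rw [two_mul, sum_range_add w n n] at ih ⊢
    push_cast
    linarith

/-- Lengths `n k` for which, up to the factor `θ`, `k * n k` positions carry no more weight than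
the first `n k` positions, and these no more than the positions
`[∑ j < k, n j, ∑ j ≤ k, n j)`. -/
structure IsBlockLength (w : ℕ → ℝ) (θ : ℝ) (n : ℕ → ℕ) : Prop where
  pos (k : ℕ) : 0 < n k
  sum_range_mul_le (k : ℕ) : ∑ i ∈ range (k * n k), w i ≤ θ * ∑ i ∈ range (n k), w i
  sum_range_le (k : ℕ) : ∑ i ∈ range (n k), w i ≤
    θ * ∑ i ∈ Ico (∑ j ∈ range k, n j) (∑ j ∈ range (k + 1), n j), w i

variable {w : ℕ → ℝ} {θ : ℝ}

lemma frequently_sum_range_two_mul_lt (hw : ∀ i, 0 < w i)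
    (hnuc : (⨅ n : ℕ, (∑ i ∈ range (2 * (n + 1)), w i) / ∑ i ∈ range (n + 1), w i) = 1)
    (hθ : 1 < θ) :
    ∃ᶠ n in atTop, ∑ i ∈ range (2 * n), w i < θ * ∑ i ∈ range n, w i := by
  have hpos (n : ℕ) : 0 < ∑ i ∈ range (n + 1), w i :=
    sum_pos (fun i _ => hw i) nonempty_range_add_one
  have hratio (n : ℕ) : 1 < (∑ i ∈ range (2 * (n + 1)), w i) / ∑ i ∈ range (n + 1), w i := by
    rw [one_lt_div (hpos n), two_mul, sum_range_add w (n + 1) (n + 1)]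
    exact lt_add_of_pos_right _ (sum_pos (fun i _ => hw _) nonempty_range_add_one)
  have hinf := infinite_setOf_lt_of_forall_iInf_lt (fun n => hnuc ▸ hratio n) (hnuc ▸ hθ)
  refine (tendsto_add_atTop_nat 1).frequently ((Nat.frequently_atTop_iff_infinite.2 hinf).mono ?_)
  exact fun n hn => (div_lt_iff₀ (hpos n)).1 hn

lemma frequently_sum_range_mul_le (hw : ∀ i, 0 < w i) (hanti : Antitone w)
    (hnuc : (⨅ n : ℕ, (∑ i ∈ range (2 * (n + 1)), w i) / ∑ i ∈ range (n + 1), w i) = 1)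
    (hθ : 1 < θ) (k : ℕ) :
    ∃ᶠ n in atTop, ∑ i ∈ range (k * n), w i ≤ θ * ∑ i ∈ range n, w i := by
  have hk : (0 : ℝ) < k + 1 := by positivity
  have hε : 1 < 1 + (θ - 1) / (k + 1) := lt_add_of_pos_right 1 (div_pos (sub_pos.2 hθ) hk)
  refine (frequently_sum_range_two_mul_lt hw hnuc hε).mono fun n hn => ?_
  have hincr : 0 ≤ ∑ i ∈ range (2 * n), w i - ∑ i ∈ range n, w i := by
    rw [two_mul, sum_range_add, add_sub_cancel_left]
    exact sum_nonneg fun i _ => (hw _).le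
  calc ∑ i ∈ range (k * n), w i ≤ ∑ i ∈ range ((k + 1) * n), w i :=
        sum_le_sum_of_subset_of_nonneg (range_mono (Nat.mul_le_mul_right n k.le_succ))
          fun i _ _ => (hw i).le
    _ ≤ ∑ i ∈ range n, w i + k * (∑ i ∈ range (2 * n), w i - ∑ i ∈ range n, w i) :=
        sum_range_succ_mul_le_of_antitone hanti n k
    _ ≤ ∑ i ∈ range n, w i + (k + 1) * ((θ - 1) / (k + 1) * ∑ i ∈ range n, w i) := by
        gcongr
        · linarith
        · linarith
    _ = θ * ∑ i ∈ range n, w i := by field_simp; ring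

lemma eventually_sum_range_le_mul_sum_Ico (hw : ∀ i, 0 ≤ w i) (hsum : ¬ Summable w)
    (hθ : 1 < θ) (M : ℕ) :
    ∀ᶠ n in atTop, ∑ i ∈ range n, w i ≤ θ * ∑ i ∈ Ico M (M + n), w i := by
  have htop : Tendsto (fun n => (θ - 1) * ∑ i ∈ range n, w i) atTop atTop :=
    ((not_summable_iff_tendsto_nat_atTop_of_nonneg hw).1 hsum).const_mul_atTop (sub_pos.2 hθ)
  filter_upwards [htop.eventually_ge_atTop (θ * ∑ i ∈ range M, w i)] with n hn
  have hmono : ∑ i ∈ range n, w i ≤ ∑ i ∈ range (M + n), w i :=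
    sum_le_sum_of_subset_of_nonneg (range_mono (Nat.le_add_left n M)) fun i _ _ => hw i
  rw [sum_Ico_eq_sub _ (Nat.le_add_right M n)]
  nlinarith

theorem exists_isBlockLength (hw : ∀ i, 0 < w i) (hanti : Antitone w) (hsum : ¬ Summable w)
    (hnuc : (⨅ n : ℕ, (∑ i ∈ range (2 * (n + 1)), w i) / ∑ i ∈ range (n + 1), w i) = 1)
    (hθ : 1 < θ) : ∃ n, IsBlockLength w θ n := by
  obtain ⟨n, hn⟩ := exists_seq_of_forall_sum_range fun k M =>
    ((frequently_sum_range_mul_le hw hanti hnuc hθ k).and_eventually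
      ((eventually_sum_range_le_mul_sum_Ico (fun i => (hw i).le) hsum hθ M).and
        (eventually_gt_atTop 0))).exists
  exact ⟨n, fun k => (hn k).2.2, fun k => (hn k).1, fun k => by
    simpa only [sum_range_succ n k] using (hn k).2.1⟩

end BlockLengths

section Norms

open Finset Function

variable {p : ℝ} {w b : ℕ → ℝ}

lemma lorentzNorm_le (hp : 0 < p) (hw : ∀ i, 0 ≤ w i) {S : ℝ} (hS : 0 ≤ S)
    (h : ∀ σ : Equiv.Perm ℕ, ∑' j, |b (σ j)| ^ p * w j ≤ S ^ p) : lorentzNorm w p b ≤ S := by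
  refine ciSup_le fun σ => ?_
  rw [one_div]
  exact (Real.rpow_inv_le_iff_of_pos
    (tsum_nonneg fun j => mul_nonneg (Real.rpow_nonneg (abs_nonneg _) p) (hw j)) hS hp).2 (h σ)

lemma le_lorentzNorm (hp : 0 < p) (hw : ∀ i, 0 ≤ w i) {S : ℝ} (hS : 0 ≤ S)
    (hbdd : BddAbove (Set.range fun σ : Equiv.Perm ℕ => ∑' j, |b (σ j)| ^ p * w j))
    {σ : Equiv.Perm ℕ} (h : S ^ p ≤ ∑' j, |b (σ j)| ^ p * w j) : S ≤ lorentzNorm w p b := by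
  have hnonneg (τ : Equiv.Perm ℕ) : 0 ≤ ∑' j, |b (τ j)| ^ p * w j :=
    tsum_nonneg fun j => mul_nonneg (Real.rpow_nonneg (abs_nonneg _) p) (hw j)
  obtain ⟨R, hR⟩ := hbdd
  have hbdd' : BddAbove (Set.range fun σ : Equiv.Perm ℕ =>
      (∑' j, |b (σ j)| ^ p * w j) ^ (1 / p)) :=
    ⟨R ^ (1 / p), Set.forall_mem_range.2 fun τ =>
      Real.rpow_le_rpow (hnonneg τ) (hR ⟨τ, rfl⟩) (by positivity)⟩
  refine le_ciSup_of_le hbdd' σ ?_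
  rw [one_div]
  exact (Real.le_rpow_inv_iff_of_pos hS (hnonneg σ) hp).2 h

/-- The norm `max_{1 ≤ i ≤ k} |a (k, i)|` of the `k`-th component in `ℓ_∞^k`; it is `0` for
`k = 0`, where the index set is empty. -/
noncomputable def blockSup (a : ℕ × ℕ → ℝ) (k : ℕ) : ℝ :=
  ⨆ i : {i : ℕ // 1 ≤ i ∧ i ≤ k}, |a (k, i.1)|

variable {a : ℕ × ℕ → ℝ} {s : Finset ℕ} {k i : ℕ}

lemma blockSup_nonneg (a : ℕ × ℕ → ℝ) (k : ℕ) : 0 ≤ blockSup a k :=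
  Real.iSup_nonneg fun _ => abs_nonneg _

lemma abs_le_blockSup (hi : 1 ≤ i) (hik : i ≤ k) : |a (k, i)| ≤ blockSup a k := by
  have : Finite {i : ℕ // 1 ≤ i ∧ i ≤ k} := inferInstanceAs (Finite (Set.Icc 1 k))
  exact le_ciSup (f := fun i : {i : ℕ // 1 ≤ i ∧ i ≤ k} => |a (k, i.1)|)
    (Set.finite_range _).bddAbove ⟨i, hi, hik⟩

lemma exists_abs_eq_blockSup (a : ℕ × ℕ → ℝ) (hk : 1 ≤ k) :
    ∃ i, 1 ≤ i ∧ i ≤ k ∧ |a (k, i)| = blockSup a k := by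
  have : Finite {i : ℕ // 1 ≤ i ∧ i ≤ k} := inferInstanceAs (Finite (Set.Icc 1 k))
  have : Nonempty {i : ℕ // 1 ≤ i ∧ i ≤ k} := ⟨⟨1, le_rfl, hk⟩⟩
  obtain ⟨⟨i, hi, hik⟩, h⟩ := exists_eq_ciSup_of_finite
    (f := fun i : {i : ℕ // 1 ≤ i ∧ i ≤ k} => |a (k, i.1)|)
  exact ⟨i, hi, hik, h⟩

lemma WpNorm_nonneg (p : ℝ) (a : ℕ × ℕ → ℝ) : 0 ≤ WpNorm p a :=
  Real.rpow_nonneg (tsum_nonneg fun k => Real.rpow_nonneg (blockSup_nonneg a k) p) _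

lemma WpNorm_rpow (hp : 0 < p) (hs : ∀ z ∈ support a, z.1 ∈ s) :
    WpNorm p a ^ p = ∑ k ∈ s, blockSup a k ^ p := by
  have hzero (k : ℕ) (hk : k ∉ s) : blockSup a k ^ p = 0 := by
    have ha (i : ℕ) : a (k, i) = 0 := notMem_support.1 fun h => hk (hs _ h)
    simp only [blockSup, ha, abs_zero, Real.iSup_const_zero, Real.zero_rpow hp.ne']
  calc WpNorm p a ^ p = ∑' k, blockSup a k ^ p := by
        rw [WpNorm, one_div]
        exact Real.rpow_inv_rpow (tsum_nonneg fun k => Real.rpow_nonneg (blockSup_nonneg a k) p)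
          hp.ne'
    _ = ∑ k ∈ s, blockSup a k ^ p := tsum_eq_sum hzero

end Norms

section BlockVectors

open Finset Function

/-- The union `⋃_{1 ≤ i ≤ k} A (k, i)`: the support of the image of the `k`-th component
`ℓ_∞^k`. -/
def blockUnion (A : ℕ × ℕ → Finset ℕ) (k : ℕ) : Finset ℕ :=
  (Icc 1 k).biUnion fun i => A (k, i)

lemma mem_blockUnion {A : ℕ × ℕ → Finset ℕ} {k j : ℕ} :
    j ∈ blockUnion A k ↔ ∃ i, 1 ≤ i ∧ i ≤ k ∧ j ∈ A (k, i) := by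
  simp only [blockUnion, mem_biUnion, mem_Icc, and_assoc]

lemma pairwise_disjoint_blockUnion {A : ℕ × ℕ → Finset ℕ} (hA : Pairwise (Disjoint on A)) :
    Pairwise (Disjoint on blockUnion A) := fun k l hkl => by
  simp only [onFun, blockUnion, disjoint_biUnion_left, disjoint_biUnion_right]
  exact fun i _ j _ => hA (ne_of_apply_ne Prod.fst hkl)

lemma card_blockUnion {A : ℕ × ℕ → Finset ℕ} (hA : Pairwise (Disjoint on A)) {n : ℕ → ℕ}
    (hcard : ∀ z, #(A z) = n z.1) (k : ℕ) : #(blockUnion A k) = k * n k := by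
  rw [blockUnion, card_biUnion (t := fun i => A (k, i))
    fun i _ j _ hij => hA ((Prod.mk_right_injective k).ne hij)]
  simp only [hcard, sum_const, Nat.card_Icc, Nat.add_sub_cancel, smul_eq_mul]

/-- Blocks `x (k, i) = (c k)⁻¹ • 1_{A (k, i)}` of the lengths `n k`, normalized so that the first
`n k` positions carry the weight `c k ^ p`. -/
structure IsBlockSystem (p : ℝ) (w : ℕ → ℝ) (θ : ℝ) (n : ℕ → ℕ) (A : ℕ × ℕ → Finset ℕ)
    (c : ℕ → ℝ) : Prop extends IsBlockLength w θ n where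
  disjoint : Pairwise (Disjoint on A)
  card_eq (z : ℕ × ℕ) : #(A z) = n z.1
  coeff_pos (k : ℕ) : 0 < c k
  coeff_rpow (k : ℕ) : c k ^ p = ∑ i ∈ range (n k), w i

theorem exists_isBlockSystem {p : ℝ} (hp : p ≠ 0) {w : ℕ → ℝ} (hw : ∀ i, 0 < w i)
    (hanti : Antitone w) (hsum : ¬ Summable w)
    (hnuc : (⨅ n : ℕ, (∑ i ∈ range (2 * (n + 1)), w i) / ∑ i ∈ range (n + 1), w i) = 1)
    {θ : ℝ} (hθ : 1 < θ) : ∃ n A c, IsBlockSystem p w θ n A c := by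
  obtain ⟨n, hn⟩ := exists_isBlockLength hw hanti hsum hnuc hθ
  obtain ⟨A, hA, hcard⟩ := exists_pairwise_disjoint_card_eq fun z : ℕ × ℕ => n z.1
  have hpos (k : ℕ) : 0 < ∑ i ∈ range (n k), w i :=
    sum_pos (fun i _ => hw i) (nonempty_range_iff.2 (hn.pos k).ne')
  exact ⟨n, A, fun k => (∑ i ∈ range (n k), w i) ^ p⁻¹, hn, hA, hcard,
    fun k => Real.rpow_pos_of_pos (hpos k) _, fun k => Real.rpow_inv_rpow (hpos k).le hp⟩

/-- `b` is the vector `∑ a (k, i) • x (k, i)` on the constant-coefficient blocks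
`x (k, i) = (c k)⁻¹ • 1_{A (k, i)}`, `1 ≤ i ≤ k`. -/
structure IsBlockVector (A : ℕ × ℕ → Finset ℕ) (c : ℕ → ℝ) (a : ℕ × ℕ → ℝ) (b : ℕ → ℝ) :
    Prop where
  eq_div : ∀ k i : ℕ, 1 ≤ i → i ≤ k → ∀ j ∈ A (k, i), b j = a (k, i) / c k
  eq_zero : ∀ j : ℕ, (∀ k i : ℕ, 1 ≤ i → i ≤ k → j ∉ A (k, i)) → b j = 0

namespace IsBlockVector

variable {p θ : ℝ} {w b c : ℕ → ℝ} {n : ℕ → ℕ} {A : ℕ × ℕ → Finset ℕ} {a : ℕ × ℕ → ℝ}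
  {s : Finset ℕ}

lemma abs_rpow_eq (hb : IsBlockVector A c a b) (hc : ∀ k, 0 < c k) {k i j : ℕ} (hi : 1 ≤ i)
    (hik : i ≤ k) (hj : j ∈ A (k, i)) : |b j| ^ p = |a (k, i)| ^ p / c k ^ p := by
  rw [hb.eq_div k i hi hik j hj, abs_div, abs_of_pos (hc k),
    Real.div_rpow (abs_nonneg _) (hc k).le]

lemma eq_zero_of_forall_notMem (hb : IsBlockVector A c a b) (hs : ∀ z ∈ support a, z.1 ∈ s)
    {j : ℕ} (hj : ∀ k ∈ s, j ∉ blockUnion A k) : b j = 0 := by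
  by_cases hmem : ∃ k i, 1 ≤ i ∧ i ≤ k ∧ j ∈ A (k, i)
  · obtain ⟨k, i, hi, hik, hji⟩ := hmem
    have hk : k ∉ s := fun hk => hj k hk (mem_blockUnion.2 ⟨i, hi, hik, hji⟩)
    rw [hb.eq_div k i hi hik j hji, notMem_support.1 fun h => hk (hs _ h), zero_div]
  · push Not at hmem
    exact hb.eq_zero j hmem

lemma finite_support (hb : IsBlockVector A c a b) (hs : ∀ z ∈ support a, z.1 ∈ s) :
    b.support.Finite := by
  refine (s.biUnion (blockUnion A)).finite_toSet.subset ?_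
  refine fun j hj => by_contra fun hmem => hj (hb.eq_zero_of_forall_notMem hs fun k hk hjk => ?_)
  exact hmem (mem_coe.2 (mem_biUnion.2 ⟨k, hk, hjk⟩))

lemma tsum_comp_perm_le (hb : IsBlockVector A c a b) (hp : 0 < p) (hw : ∀ i, 0 ≤ w i)
    (hanti : Antitone w) (h : IsBlockSystem p w θ n A c) (hs : ∀ z ∈ support a, z.1 ∈ s)
    (σ : Equiv.Perm ℕ) :
    ∑' j, |b (σ j)| ^ p * w j ≤ θ * ∑ k ∈ s, blockSup a k ^ p := by
  have hpow (k : ℕ) : 0 ≤ blockSup a k ^ p := Real.rpow_nonneg (blockSup_nonneg a k) p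
  have hcpos (k : ℕ) : 0 < c k ^ p := Real.rpow_pos_of_pos (h.coeff_pos k) p
  have hbB : ∀ k ∈ s, ∀ j ∈ blockUnion A k, |b j| ^ p ≤ blockSup a k ^ p / c k ^ p := by
    intro k _ j hj
    obtain ⟨i, hi, hik, hji⟩ := mem_blockUnion.1 hj
    rw [hb.abs_rpow_eq h.coeff_pos hi hik hji]
    have := hcpos k
    gcongr
    exact abs_le_blockSup hi hik
  calc ∑' j, |b (σ j)| ^ p * w j
      ≤ ∑ k ∈ s, blockSup a k ^ p / c k ^ p * ∑ i ∈ range #(blockUnion A k), w i :=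
        tsum_comp_perm_mul_le (f := fun j => |b j| ^ p) hanti hw
          ((pairwise_disjoint_blockUnion h.disjoint).set_pairwise _)
          (fun k _ => div_nonneg (hpow k) (hcpos k).le) hbB
          (fun j hj => by
            rw [hb.eq_zero_of_forall_notMem hs hj, abs_zero, Real.zero_rpow hp.ne']) σ
    _ ≤ ∑ k ∈ s, blockSup a k ^ p / c k ^ p * (θ * c k ^ p) := by
        simp only [card_blockUnion h.disjoint h.card_eq, h.coeff_rpow]
        simp only [h.coeff_rpow] at hcpos
        gcongr with k
        · exact div_nonneg (hpow k) (hcpos k).le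
        · exact h.sum_range_mul_le k
    _ = θ * ∑ k ∈ s, blockSup a k ^ p := by
        rw [mul_sum]
        exact sum_congr rfl fun k _ => by field_simp [(hcpos k).ne']

lemma exists_perm_le_tsum (hb : IsBlockVector A c a b) (hp : 0 < p) (hw : ∀ i, 0 ≤ w i)
    (h : IsBlockSystem p w θ n A c) (hθ : 0 ≤ θ) (hs : ∀ z ∈ support a, z.1 ∈ s)
    (hs1 : ∀ k ∈ s, 1 ≤ k) :
    ∃ σ : Equiv.Perm ℕ, ∑ k ∈ s, blockSup a k ^ p ≤ θ * ∑' j, |b (σ j)| ^ p * w j := by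
  have hcpos (k : ℕ) : 0 < c k ^ p := Real.rpow_pos_of_pos (h.coeff_pos k) p
  choose! i hi hik hmax using fun k hk => exists_abs_eq_blockSup a (hs1 k hk)
  let P (k : ℕ) : Finset ℕ := Ico (∑ j ∈ range k, n j) (∑ j ∈ range (k + 1), n j)
  have hP : (s : Set ℕ).PairwiseDisjoint P := fun k _ l _ hkl => by
    rw [onFun, ← disjoint_coe, coe_Ico, coe_Ico]
    exact (sum_mono_set n).comp range_mono |>.pairwise_disjoint_on_Ico_succ hkl
  have hPcard (k : ℕ) : #(P k) = n k := by
    rw [Nat.card_Ico, sum_range_succ, Nat.add_sub_cancel_left]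
  obtain ⟨σ, hσ⟩ := exists_perm_sum_mul_le_tsum (f := fun j => |b j| ^ p)
    (u := fun k => blockSup a k ^ p / c k ^ p) (D := fun k => A (k, i k)) hw
    (fun j => Real.rpow_nonneg (abs_nonneg _) p)
    ((hb.finite_support hs).subset fun j hj hbj => hj (by simp [hbj, hp.ne'])) hP
    (fun k _ l _ hkl => h.disjoint (ne_of_apply_ne Prod.fst hkl))
    (fun k _ => by rw [hPcard, h.card_eq])
    (fun k hk j hj => by rw [hb.abs_rpow_eq h.coeff_pos (hi k hk) (hik k hk) hj, hmax k hk])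
  refine ⟨σ, ?_⟩
  calc ∑ k ∈ s, blockSup a k ^ p = ∑ k ∈ s, blockSup a k ^ p / c k ^ p * c k ^ p :=
        sum_congr rfl fun k _ => (div_mul_cancel₀ _ (hcpos k).ne').symm
    _ ≤ ∑ k ∈ s, blockSup a k ^ p / c k ^ p * (θ * ∑ j ∈ P k, w j) := by
        gcongr with k
        · exact div_nonneg (Real.rpow_nonneg (blockSup_nonneg a k) p) (hcpos k).le
        · exact (h.coeff_rpow k).trans_le (h.sum_range_le k)
    _ = θ * ∑ k ∈ s, blockSup a k ^ p / c k ^ p * ∑ j ∈ P k, w j := by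
        simp only [mul_sum, mul_left_comm θ]
    _ ≤ θ * ∑' j, |b (σ j)| ^ p * w j := mul_le_mul_of_nonneg_left hσ hθ

theorem lorentzNorm_mem_Icc {C : ℝ} (hb : IsBlockVector A c a b) (hp : 0 < p)
    (hw : ∀ i, 0 ≤ w i) (hanti : Antitone w) (hC : 0 < C)
    (h : IsBlockSystem p w (C ^ p) n A c) (hfin : (support a).Finite)
    (hsupp : support a ⊆ {z : ℕ × ℕ | 1 ≤ z.2 ∧ z.2 ≤ z.1}) :
    lorentzNorm w p b ∈ Set.Icc (C⁻¹ * WpNorm p a) (C * WpNorm p a) := by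
  let s : Finset ℕ := hfin.toFinset.image Prod.fst
  have hs : ∀ z ∈ support a, z.1 ∈ s := fun z hz =>
    mem_image_of_mem _ (hfin.mem_toFinset.2 hz)
  have hs1 : ∀ k ∈ s, 1 ≤ k := fun k hk => by
    obtain ⟨z, hz, rfl⟩ := mem_image.1 hk
    exact (hsupp (hfin.mem_toFinset.1 hz)).1.trans (hsupp (hfin.mem_toFinset.1 hz)).2
  have hupper (σ : Equiv.Perm ℕ) : ∑' j, |b (σ j)| ^ p * w j ≤ (C * WpNorm p a) ^ p := by
    rw [Real.mul_rpow hC.le (WpNorm_nonneg p a), WpNorm_rpow hp hs]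
    exact hb.tsum_comp_perm_le hp hw hanti h hs σ
  have hCp : 0 < C ^ p := Real.rpow_pos_of_pos hC p
  obtain ⟨σ, hσ⟩ := hb.exists_perm_le_tsum hp hw h hCp.le hs hs1
  have hlower : (C⁻¹ * WpNorm p a) ^ p ≤ ∑' j, |b (σ j)| ^ p * w j := by
    rw [Real.mul_rpow (inv_nonneg.2 hC.le) (WpNorm_nonneg p a), WpNorm_rpow hp hs,
      Real.inv_rpow hC.le]
    exact (inv_mul_le_iff₀ hCp).2 hσ
  exact ⟨le_lorentzNorm hp hw (mul_nonneg (inv_nonneg.2 hC.le) (WpNorm_nonneg p a))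
      ⟨_, Set.forall_mem_range.2 hupper⟩ hlower,
    lorentzNorm_le hp hw (mul_nonneg hC.le (WpNorm_nonneg p a)) hupper⟩

end IsBlockVector

end BlockVectors

theorem stmt_2_general (p : ℝ) (hp : 0 < p)
    (w : ℕ → ℝ) (hw_pos : ∀ i, 0 < w i) (hw_anti : Antitone w) (hw_nonsum : ¬ Summable w)
    (hw_nuc : (⨅ n : ℕ, (∑ i ∈ Finset.range (2 * (n + 1)), w i) /
      (∑ i ∈ Finset.range (n + 1), w i)) = 1) (C : ℝ) (hC : 1 < C) :
    ∃ (A : ℕ × ℕ → Finset ℕ) (c : ℕ → ℝ),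
      (∀ k i : ℕ, 1 ≤ i → i ≤ k → (A (k, i)).Nonempty) ∧
      (∀ k i k' i' : ℕ, 1 ≤ i → i ≤ k → 1 ≤ i' → i' ≤ k' → (k, i) ≠ (k', i') →
        Disjoint (A (k, i)) (A (k', i'))) ∧
      (∀ k : ℕ, 1 ≤ k → 0 < c k) ∧
      ∀ a : ℕ × ℕ → ℝ, (Function.support a).Finite →
        (Function.support a ⊆ {z : ℕ × ℕ | 1 ≤ z.2 ∧ z.2 ≤ z.1}) →
        ∀ b : ℕ → ℝ,
          (∀ k i : ℕ, 1 ≤ i → i ≤ k → ∀ j ∈ A (k, i), b j = a (k, i) / c k) →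
          (∀ j : ℕ, (∀ k i : ℕ, 1 ≤ i → i ≤ k → j ∉ A (k, i)) → b j = 0) →
          C⁻¹ * WpNorm p a ≤ lorentzNorm w p b ∧ lorentzNorm w p b ≤ C * WpNorm p a := by
  obtain ⟨n, A, c, h⟩ := exists_isBlockSystem hp.ne' hw_pos hw_anti hw_nonsum hw_nuc
    (Real.one_lt_rpow hC hp)
  refine ⟨A, c, fun k i _ _ => Finset.card_pos.1 (h.card_eq (k, i) ▸ h.pos k),
    fun _ _ _ _ _ _ _ _ hne => h.disjoint hne, fun k _ => h.coeff_pos k, ?_⟩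
  exact fun a hfin hsupp b hbA hb0 => IsBlockVector.lorentzNorm_mem_Icc ⟨hbA, hb0⟩ hp
    (fun i => (hw_pos i).le) hw_anti (one_pos.trans hC) h hfin hsupp

/-- Let `1 ≤ p < ∞` and let `w ∈ 𝒲` (a positive, nonincreasing null weight
with `w_1 = 1`, not summable; `0`-indexed, so `w 0` is the paper's `w_1`) satisfy
condition (NUC): `inf_{n ≥ 1} (∑_{i=1}^{2n} w_i)/(∑_{i=1}^n w_i) = 1`.  Then there exist
`C ≥ 1`, pairwise disjoint nonempty finite sets `A_{k,i} ⊂ ℕ` (`k ≥ 1`, `1 ≤ i ≤ k`) and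
positive reals `c_k` such that for every finitely supported family `(a_{k,i})`, any
sequence `b` with `b_j = a_{k,i}/c_k` for `j ∈ A_{k,i}` and `b_j = 0` otherwise satisfies
`C⁻¹ (∑_k max_{1≤i≤k} |a_{k,i}|^p)^{1/p} ≤ ‖b‖_{d(w,p)} ≤ C (∑_k max_{1≤i≤k} |a_{k,i}|^p)^{1/p}`.
That is, the Lorentz space `d(w,p)` contains a constant-coefficient block-basic copy of
`W_p = (⊕_{k=1}^∞ ℓ_∞^k)_{ℓ_p}`. -/
theorem stmt_2 (p : ℝ) (hp : 1 ≤ p)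
    (w : ℕ → ℝ) (hw_pos : ∀ i, 0 < w i) (hw_one : w 0 = 1) (hw_anti : Antitone w)
    (hw_null : Filter.Tendsto w Filter.atTop (nhds 0)) (hw_nonsum : ¬ Summable w)
    (hw_nuc : (⨅ n : ℕ, (∑ i ∈ Finset.range (2 * (n + 1)), w i) /
      (∑ i ∈ Finset.range (n + 1), w i)) = 1) :
    ∃ (C : ℝ) (A : ℕ × ℕ → Finset ℕ) (c : ℕ → ℝ), 1 ≤ C ∧
      (∀ k i : ℕ, 1 ≤ i → i ≤ k → (A (k, i)).Nonempty) ∧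
      (∀ k i k' i' : ℕ, 1 ≤ i → i ≤ k → 1 ≤ i' → i' ≤ k' → (k, i) ≠ (k', i') →
        Disjoint (A (k, i)) (A (k', i'))) ∧
      (∀ k : ℕ, 1 ≤ k → 0 < c k) ∧
      ∀ a : ℕ × ℕ → ℝ, (Function.support a).Finite →
        (Function.support a ⊆ {z : ℕ × ℕ | 1 ≤ z.2 ∧ z.2 ≤ z.1}) →
        ∀ b : ℕ → ℝ,
          (∀ k i : ℕ, 1 ≤ i → i ≤ k → ∀ j ∈ A (k, i), b j = a (k, i) / c k) →
          (∀ j : ℕ, (∀ k i : ℕ, 1 ≤ i → i ≤ k → j ∉ A (k, i)) → b j = 0) →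
          C⁻¹ * WpNorm p a ≤ lorentzNorm w p b ∧ lorentzNorm w p b ≤ C * WpNorm p a := by
  obtain ⟨A, c, h⟩ := stmt_2_general p (one_pos.trans_le hp) w hw_pos hw_anti hw_nonsum hw_nuc 2
    one_lt_two
  exact ⟨2, A, c, one_le_two, h⟩
end

section
/- Let 1 ≤ p < ∞ and let w ∈ 𝒲 satisfy condition (NUC). Then there exist a constant C ≥ 1, pairwise disjoint nonempty finite sets A_{k,i} ⊂ ℕ (k ≥ 1, 1 ≤ i ≤ k) and positive reals c_k (k ≥ 1) such that for every finitely supported family of reals (a_{k,i})_{k≥1, 1≤i≤k}, the sequence b = (b_j)_{j≥1} defined by b_j = a_{k,i}/c_k if j ∈ A_{k,i} and b_j = 0 otherwise, satisfies C^{-1}·(∑_{k=1}^∞ max_{1≤i≤k}|a_{k,i}|^p)^{1/p} ≤ ‖b‖_{g(w,p)} ≤ C·(∑_{k=1}^∞ max_{1≤i≤k}|a_{k,i}|^p)^{1/p}. That is, the Garling sequence space g(w,p) contains a constant-coefficient block-basic copy of W_p = (⊕_{k=1}^∞ ℓ_∞^k)_{ℓ_p}. -/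
/-- The Garling norm `‖b‖_{g(w,p)} = sup (∑_k |b_{n_k}|^p w_k)^{1/p}` of a real sequence
`b`, the supremum taken over all strictly increasing sequences `n_1 < n_2 < ⋯` of indices
(strictly monotone maps `f : ℕ → ℕ`; everything `0`-indexed). -/
noncomputable def garlingNorm (w : ℕ → ℝ) (p : ℝ) (b : ℕ → ℝ) : ℝ :=
  ⨆ f : {f : ℕ → ℕ // StrictMono f}, (∑' k : ℕ, |b (f.1 k)| ^ p * w k) ^ (1 / p)

/-!
Write `W(n) = w_1 + ⋯ + w_n`, let the blocks of level `k` be `k` consecutive intervals of a common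
length `n k`, and normalise them by `c k = W(n k) ^ (1/p)`. Two properties of the lengths give an
isomorphism constant `θ ^ (1/p)` with `θ > 1` as close to `1` as desired.

* `W(k * n k) ≤ θ * W(n k)`: by concavity of `W` it is enough that `W(2 * n k) / W(n k)` is close to
  `1`, which is what (NUC) provides. A subsequence that runs through the whole level `k` then gains
  at most the factor `θ` over one that meets a single block, so only `max_i |a (k, i)|` matters.
* `W(n 0 + ⋯ + n (k-1))` is small compared with `W(n k)`: this holds for long blocks as `W` is
  unbounded. Hence the subsequence that enumerates one maximal block from each level reads the
  block of level `k` with essentially its full weight, although it starts late.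
-/

open Finset

lemma infinite_setOf_lt_of_forall_ciInf_lt {ι α : Type*} [Nonempty ι]
    [ConditionallyCompleteLinearOrder α] {u : ι → α} {c : α} (hu : ∀ i, ⨅ j, u j < u i)
    (hc : ⨅ j, u j < c) : {i | u i < c}.Infinite := by
  intro hfin
  obtain ⟨i, hi, hi_min⟩ := Set.exists_min_image _ u hfin (exists_lt_of_ciInf_lt hc)
  obtain ⟨j, hj⟩ := exists_lt_of_ciInf_lt (hu i)
  exact (hi_min j (hj.trans hi)).not_gt hj

lemma exists_seq_forall_sum_range {P : ℕ → ℕ → ℕ → Prop} (h : ∀ k s, ∃ m, P k s m) :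
    ∃ n : ℕ → ℕ, ∀ k, P k (∑ l ∈ range k, n l) (n k) := by
  choose g hg using h
  let s : ℕ → ℕ := fun k => Nat.rec 0 (fun l t => t + g l t) k
  have hs : ∀ k, ∑ l ∈ range k, g l (s l) = s k := fun k => by
    induction k with
    | zero => rfl
    | succ k ih => rw [sum_range_succ, ih]
  exact ⟨fun k => g k (s k), fun k => by rw [hs]; exact hg _ _⟩

lemma sum_card_filter_lt {α M : Type*} [LinearOrder α] [AddCommMonoid M] (g : ℕ → M)
    (s : Finset α) : ∑ x ∈ s, g #{y ∈ s | y < x} = ∑ i ∈ range #s, g i := by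
  induction s using Finset.induction_on_max with
  | empty => simp
  | insert a s ha ih =>
    have ha_notMem : a ∉ s := fun h => (ha a h).false
    have h_rank_max : {y ∈ insert a s | y < a} = s := by
      rw [filter_insert, if_neg (lt_irrefl a), filter_true_of_mem ha]
    have h_rank : ∀ x ∈ s, {y ∈ insert a s | y < x} = {y ∈ s | y < x} := fun x hx => by
      rw [filter_insert, if_neg (ha x hx).not_gt]
    rw [sum_insert ha_notMem, card_insert_of_notMem ha_notMem, sum_range_succ, h_rank_max,
      sum_congr rfl fun x hx => by rw [h_rank x hx], ih, add_comm]

lemma exists_strictMono_apply_card_filter_lt (T : Finset ℕ) :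
    ∃ f : ℕ → ℕ, StrictMono f ∧ ∀ j ∈ T, f #{t ∈ T | t < j} = j := by
  classical
  -- Numbers beyond `T` are added to make the enumeration infinite; they do not alter ranks in `T`.
  let S : ℕ → Prop := fun j => j ∈ T ∨ ∀ t ∈ T, t < j
  have hS : (Set.ofPred S).Infinite := Set.infinite_of_forall_exists_gt fun N => by
    have h_sup : ∀ t ∈ T, t ≤ T.sup id := fun t ht => le_sup (f := id) ht
    exact ⟨N + T.sup id + 1, Or.inr fun t ht => by have := h_sup t ht; omega, by omega⟩
  refine ⟨Nat.nth S, Nat.nth_strictMono hS, fun j hj => ?_⟩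
  have h_count : Nat.count S j = #{t ∈ T | t < j} := by
    rw [Nat.count_eq_card_filter_range]
    congr 1
    ext t
    simp only [mem_filter, mem_range, S]
    grind
  rw [← h_count]
  exact Nat.nth_count (Or.inl hj)

lemma card_filter_lt_biUnion_le {α κ : Type*} [LinearOrder α] [LinearOrder κ] {I : Finset κ}
    {T : κ → Finset α} (hT : ∀ k ∈ I, ∀ l ∈ I, k < l → ∀ x ∈ T k, ∀ y ∈ T l, x < y)
    {k : κ} (hk : k ∈ I) {x : α} (hx : x ∈ T k) :
    #{y ∈ I.biUnion T | y < x} ≤ ∑ l ∈ I with l < k, #(T l) + #{y ∈ T k | y < x} := by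
  have h_sub : {y ∈ I.biUnion T | y < x} ⊆
      {l ∈ I | l < k}.biUnion T ∪ {y ∈ T k | y < x} := fun y hy => by
    obtain ⟨hy, hyx⟩ := mem_filter.1 hy
    obtain ⟨l, hl, hyl⟩ := mem_biUnion.1 hy
    rcases lt_trichotomy l k with hlk | rfl | hkl
    · exact mem_union_left _ (mem_biUnion.2 ⟨l, mem_filter.2 ⟨hl, hlk⟩, hyl⟩)
    · exact mem_union_right _ (mem_filter.2 ⟨hyl, hyx⟩)
    · exact absurd (hT k hk l hl hkl x hx y hyl) hyx.not_gt
  calc #{y ∈ I.biUnion T | y < x}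
      ≤ #({l ∈ I | l < k}.biUnion T) + #{y ∈ T k | y < x} :=
        (card_le_card h_sub).trans (card_union_le _ _)
    _ ≤ ∑ l ∈ I with l < k, #(T l) + #{y ∈ T k | y < x} := by gcongr; exact card_biUnion_le

lemma pairwiseDisjoint_of_forall_lt {α κ : Type*} [Preorder α] [LinearOrder κ] {I : Set κ}
    {T : κ → Finset α} (hT : ∀ k ∈ I, ∀ l ∈ I, k < l → ∀ x ∈ T k, ∀ y ∈ T l, x < y) :
    I.PairwiseDisjoint T := by
  intro k hk l hl hkl
  refine disjoint_left.2 fun x hxk hxl => ?_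
  rcases hkl.lt_or_gt with h | h
  · exact (hT k hk l hl h x hxk x hxl).false
  · exact (hT l hl k hk h x hxl x hxk).false

section Weights

/-- The primitive weight `W(n) = w_1 + ⋯ + w_n`, which is the `p`-th power of the norm in
`g(w, p)` of a sum of `n` unit vectors. -/
def weightSum (w : ℕ → ℝ) (n : ℕ) : ℝ := ∑ i ∈ range n, w i

variable {w : ℕ → ℝ}

lemma weightSum_add (w : ℕ → ℝ) (m n : ℕ) :
    weightSum w (m + n) = weightSum w m + ∑ i ∈ range n, w (m + i) :=
  sum_range_add w m n

lemma weightSum_pos (hw : ∀ i, 0 < w i) {n : ℕ} (hn : 0 < n) : 0 < weightSum w n :=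
  sum_pos (fun i _ => hw i) (nonempty_range_iff.2 hn.ne')

lemma weightSum_mono (hw : ∀ i, 0 ≤ w i) : Monotone (weightSum w) := fun _ _ h =>
  sum_le_sum_of_subset_of_nonneg (range_mono h) fun i _ _ => hw i

lemma weightSum_strictMono (hw : ∀ i, 0 < w i) : StrictMono (weightSum w) :=
  strictMono_nat_of_lt_succ fun n => by
    simpa only [weightSum, sum_range_succ] using lt_add_of_pos_right _ (hw n)

lemma tendsto_weightSum_atTop (hw : ∀ i, 0 ≤ w i) (hsum : ¬ Summable w) :
    Filter.Tendsto (weightSum w) Filter.atTop Filter.atTop :=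
  (not_summable_iff_tendsto_nat_atTop_of_nonneg hw).1 hsum

lemma sum_le_weightSum_card (hw : Antitone w) (F : Finset ℕ) :
    ∑ m ∈ F, w m ≤ weightSum w #F := by
  have h_rank : ∀ m, #{t ∈ F | t < m} ≤ m := fun m => by
    simpa using card_le_card (show {t ∈ F | t < m} ⊆ range m from fun t ht => by
      simpa using (mem_filter.1 ht).2)
  calc ∑ m ∈ F, w m ≤ ∑ m ∈ F, w #{t ∈ F | t < m} := sum_le_sum fun m _ => hw (h_rank m)
    _ = weightSum w #F := sum_card_filter_lt w F

lemma sum_filter_mem_le_weightSum_card (hw : ∀ i, 0 ≤ w i) (hanti : Antitone w) {f : ℕ → ℕ}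
    (hf : f.Injective) (E F : Finset ℕ) : ∑ m ∈ F with f m ∈ E, w m ≤ weightSum w #E := by
  have h_card : #{m ∈ F | f m ∈ E} ≤ #E :=
    card_le_card_of_injOn f (fun m hm => (mem_filter.1 hm).2) hf.injOn
  exact (sum_le_weightSum_card hanti _).trans (weightSum_mono hw h_card)

lemma weightSum_mul_le (hw : ∀ i, 0 ≤ w i) (hanti : Antitone w) (k n : ℕ) :
    weightSum w (k * n) ≤ weightSum w n + k * (weightSum w (2 * n) - weightSum w n) := by
  have h_second : weightSum w (2 * n) - weightSum w n = ∑ i ∈ range n, w (n + i) := by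
    rw [two_mul, weightSum_add, add_sub_cancel_left]
  have h_block : ∀ l : ℕ, 1 ≤ l → ∑ i ∈ range n, w (l * n + i) ≤ ∑ i ∈ range n, w (n + i) :=
    fun l hl => sum_le_sum fun i _ => hanti (by gcongr; exact Nat.le_mul_of_pos_left n hl)
  have h_nonneg : 0 ≤ ∑ i ∈ range n, w (n + i) := sum_nonneg fun i _ => hw _
  rw [h_second]
  induction k with
  | zero => simpa [weightSum] using sum_nonneg fun i _ => hw i
  | succ k ih =>
    rcases k.eq_zero_or_pos with rfl | hk
    · simpa using h_nonneg
    · rw [add_mul, one_mul, weightSum_add]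
      push_cast
      linarith [h_block k hk]

lemma exists_weightSum_two_mul_lt (hw : ∀ i, 0 < w i)
    (hnuc : ⨅ n : ℕ, weightSum w (2 * (n + 1)) / weightSum w (n + 1) = 1)
    {δ : ℝ} (hδ : 0 < δ) (n₀ : ℕ) :
    ∃ n > n₀, weightSum w (2 * n) < (1 + δ) * weightSum w n := by
  have h_pos (n : ℕ) : 0 < weightSum w (n + 1) := weightSum_pos hw n.succ_pos
  -- The infimum in (NUC) is not attained, hence it is approached along arbitrarily large `n`.
  have h_infinite : {n : ℕ | weightSum w (2 * (n + 1)) / weightSum w (n + 1) < 1 + δ}.Infinite := by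
    refine infinite_setOf_lt_of_forall_ciInf_lt (fun n => ?_) (by rw [hnuc]; linarith)
    rw [hnuc, one_lt_div (h_pos n)]
    exact weightSum_strictMono hw (by omega)
  obtain ⟨n, hn, hn₀⟩ := h_infinite.exists_gt n₀
  exact ⟨n + 1, by omega, (div_lt_iff₀ (h_pos n)).1 hn⟩

lemma exists_length_mul_le_and_le_shift (hw : ∀ i, 0 < w i) (hanti : Antitone w)
    (hsum : ¬ Summable w)
    (hnuc : ⨅ n : ℕ, weightSum w (2 * (n + 1)) / weightSum w (n + 1) = 1)
    {θ : ℝ} (hθ : 1 < θ) (k s : ℕ) :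
    ∃ n, 0 < n ∧ weightSum w (k * n) ≤ θ * weightSum w n ∧
      weightSum w n ≤ θ * ∑ i ∈ range n, w (s + i) := by
  have hw' (i : ℕ) : 0 ≤ w i := (hw i).le
  obtain ⟨n₀, hn₀⟩ := Filter.eventually_atTop.1 <|
    (tendsto_weightSum_atTop hw' hsum).eventually_ge_atTop (θ * weightSum w s / (θ - 1))
  obtain ⟨n, hn, h_double⟩ := exists_weightSum_two_mul_lt hw hnuc
    (δ := (θ - 1) / (k + 1)) (div_pos (by linarith) (by positivity)) n₀
  have h_pos : 0 < weightSum w n := weightSum_pos hw (by omega)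
  refine ⟨n, by omega, ?_, ?_⟩
  · have hk : (k : ℝ) * ((θ - 1) / (k + 1)) ≤ θ - 1 := by
      rw [mul_div_left_comm]
      exact mul_le_of_le_one_right (by linarith) ((div_le_one (by positivity)).2 (by linarith))
    calc weightSum w (k * n)
        ≤ weightSum w n + k * (weightSum w (2 * n) - weightSum w n) :=
          weightSum_mul_le hw' hanti k n
      _ ≤ weightSum w n + k * ((θ - 1) / (k + 1) * weightSum w n) := by gcongr; linarith
      _ = weightSum w n + k * ((θ - 1) / (k + 1)) * weightSum w n := by ring
      _ ≤ weightSum w n + (θ - 1) * weightSum w n := by gcongr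
      _ = θ * weightSum w n := by ring
  · have h_shift : θ * weightSum w s ≤ weightSum w n * (θ - 1) :=
      (div_le_iff₀ (by linarith)).1 (hn₀ n hn.le)
    calc weightSum w n ≤ θ * (weightSum w n - weightSum w s) := by linarith
      _ ≤ θ * (weightSum w (s + n) - weightSum w s) := by
        gcongr; exact weightSum_mono hw' (Nat.le_add_left n s)
      _ = θ * ∑ i ∈ range n, w (s + i) := by rw [weightSum_add, add_sub_cancel_left]

/-- Lengths `n k` of the blocks of level `k` that suit the weight `w` up to the factor `θ`: a union
of `k` blocks of level `k` weighs at most `θ` times a single one, and a single block keeps a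
proportion `θ⁻¹` of its weight when it is placed after one block of each preceding level. -/
structure IsAdmissibleLength (w : ℕ → ℝ) (θ : ℝ) (n : ℕ → ℕ) : Prop where
  pos : ∀ k, 0 < n k
  weightSum_mul_le : ∀ k, weightSum w (k * n k) ≤ θ * weightSum w (n k)
  weightSum_le_shift : ∀ k,
    weightSum w (n k) ≤ θ * ∑ i ∈ range (n k), w (∑ l ∈ range k, n l + i)

lemma IsAdmissibleLength.nonneg {θ : ℝ} {n : ℕ → ℕ} (hn : IsAdmissibleLength w θ n)
    (hw : ∀ i, 0 < w i) : 0 ≤ θ := by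
  have hW : 0 < weightSum w (n 1) := weightSum_pos hw (hn.pos 1)
  have h_le : weightSum w (n 1) ≤ θ * weightSum w (n 1) := by
    simpa only [one_mul] using hn.weightSum_mul_le 1
  exact (pos_of_mul_pos_left (hW.trans_le h_le) hW.le).le

lemma IsAdmissibleLength.weightSum_le_shift_filter {θ : ℝ} {n : ℕ → ℕ}
    (hn : IsAdmissibleLength w θ n) (hw : ∀ i, 0 < w i) (hanti : Antitone w) (I : Finset ℕ)
    (k : ℕ) :
    weightSum w (n k) ≤ θ * ∑ i ∈ range (n k), w (∑ l ∈ I with l < k, n l + i) := by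
  have h_before : ∑ l ∈ I with l < k, n l ≤ ∑ l ∈ range k, n l :=
    sum_le_sum_of_subset fun l hl => mem_range.2 (mem_filter.1 hl).2
  refine (hn.weightSum_le_shift k).trans (mul_le_mul_of_nonneg_left ?_ (hn.nonneg hw))
  exact sum_le_sum fun i _ => hanti (Nat.add_le_add_right h_before i)

lemma exists_isAdmissibleLength (hw : ∀ i, 0 < w i) (hanti : Antitone w) (hsum : ¬ Summable w)
    (hnuc : ⨅ n : ℕ, weightSum w (2 * (n + 1)) / weightSum w (n + 1) = 1)
    {θ : ℝ} (hθ : 1 < θ) : ∃ n, IsAdmissibleLength w θ n := by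
  obtain ⟨n, hn⟩ :=
    exists_seq_forall_sum_range (exists_length_mul_le_and_le_shift hw hanti hsum hnuc hθ)
  exact ⟨n, fun k => (hn k).1, fun k => (hn k).2.1, fun k => (hn k).2.2⟩

lemma sum_comp_mul_le (hw : ∀ i, 0 ≤ w i) (hanti : Antitone w) {κ : Type*} {I : Finset κ}
    {E : κ → Finset ℕ} {D : κ → ℝ} (hD : ∀ k ∈ I, 0 ≤ D k) {B : ℕ → ℝ}
    (hB : ∀ j, B j ≤ ∑ k ∈ I with j ∈ E k, D k) {f : ℕ → ℕ} (hf : f.Injective) (F : Finset ℕ) :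
    ∑ m ∈ F, B (f m) * w m ≤ ∑ k ∈ I, D k * weightSum w #(E k) := by
  calc ∑ m ∈ F, B (f m) * w m
      ≤ ∑ m ∈ F, (∑ k ∈ I with f m ∈ E k, D k) * w m :=
        sum_le_sum fun m _ => mul_le_mul_of_nonneg_right (hB _) (hw m)
    _ = ∑ k ∈ I, D k * ∑ m ∈ F with f m ∈ E k, w m := by
        simp only [sum_filter, sum_mul, mul_sum, ite_mul, mul_ite, zero_mul, mul_zero]
        exact sum_comm
    _ ≤ ∑ k ∈ I, D k * weightSum w #(E k) := sum_le_sum fun k hk =>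
        mul_le_mul_of_nonneg_left (sum_filter_mem_le_weightSum_card hw hanti hf _ _) (hD k hk)

lemma sum_mul_sum_shift_le (hanti : Antitone w) {κ : Type*} [LinearOrder κ] {I : Finset κ}
    {T : κ → Finset ℕ} (hT : ∀ k ∈ I, ∀ l ∈ I, k < l → ∀ x ∈ T k, ∀ y ∈ T l, x < y)
    {D : κ → ℝ} (hD : ∀ k ∈ I, 0 ≤ D k) {B : ℕ → ℝ} (hB : ∀ k ∈ I, ∀ j ∈ T k, B j = D k) :
    ∑ k ∈ I, D k * ∑ i ∈ range #(T k), w (∑ l ∈ I with l < k, #(T l) + i) ≤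
      ∑ j ∈ I.biUnion T, B j * w #{t ∈ I.biUnion T | t < j} := by
  rw [sum_biUnion (pairwiseDisjoint_of_forall_lt hT)]
  refine sum_le_sum fun k hk => ?_
  rw [← sum_card_filter_lt (fun i => w (∑ l ∈ I with l < k, #(T l) + i)), mul_sum]
  refine sum_le_sum fun j hj => ?_
  rw [hB k hk j hj]
  exact mul_le_mul_of_nonneg_left (hanti (card_filter_lt_biUnion_le hT hk hj)) (hD k hk)

end Weights

section GarlingNorm

variable {w b : ℕ → ℝ} {p S : ℝ}

lemma abs_rpow_mul_nonneg (hw : ∀ i, 0 ≤ w i) (b : ℕ → ℝ) (p : ℝ) (f : ℕ → ℕ) :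
    0 ≤ fun m => |b (f m)| ^ p * w m :=
  fun m => mul_nonneg (Real.rpow_nonneg (abs_nonneg _) p) (hw m)

lemma rpow_tsum_le_rpow (hp : 0 < p) (hw : ∀ i, 0 ≤ w i) {f : ℕ → ℕ}
    (hS : ∀ F : Finset ℕ, ∑ m ∈ F, |b (f m)| ^ p * w m ≤ S) :
    (∑' m, |b (f m)| ^ p * w m) ^ (1 / p) ≤ S ^ (1 / p) :=
  Real.rpow_le_rpow (tsum_nonneg (abs_rpow_mul_nonneg hw b p f))
    (Real.tsum_le_of_sum_le (abs_rpow_mul_nonneg hw b p f) hS) (one_div_pos.2 hp).le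

lemma garlingNorm_le_rpow (hp : 0 < p) (hw : ∀ i, 0 ≤ w i)
    (hS : ∀ f : ℕ → ℕ, StrictMono f → ∀ F : Finset ℕ, ∑ m ∈ F, |b (f m)| ^ p * w m ≤ S) :
    garlingNorm w p b ≤ S ^ (1 / p) :=
  have : Nonempty {f : ℕ → ℕ // StrictMono f} := ⟨⟨id, strictMono_id⟩⟩
  ciSup_le fun f => rpow_tsum_le_rpow hp hw (hS f.1 f.2)

lemma rpow_sum_le_garlingNorm (hp : 0 < p) (hw : ∀ i, 0 ≤ w i)
    (hS : ∀ f : ℕ → ℕ, StrictMono f → ∀ F : Finset ℕ, ∑ m ∈ F, |b (f m)| ^ p * w m ≤ S)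
    (T : Finset ℕ) :
    (∑ j ∈ T, |b j| ^ p * w #{t ∈ T | t < j}) ^ (1 / p) ≤ garlingNorm w p b := by
  have h_bdd : BddAbove (Set.range fun f : {f : ℕ → ℕ // StrictMono f} =>
      (∑' m : ℕ, |b (f.1 m)| ^ p * w m) ^ (1 / p)) :=
    ⟨S ^ (1 / p), Set.forall_mem_range.2 fun f => rpow_tsum_le_rpow hp hw (hS f.1 f.2)⟩
  obtain ⟨f, hf, hfT⟩ := exists_strictMono_apply_card_filter_lt T
  have h_term := abs_rpow_mul_nonneg hw b p f
  calc (∑ j ∈ T, |b j| ^ p * w #{t ∈ T | t < j}) ^ (1 / p)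
      = (∑ m ∈ range #T, |b (f m)| ^ p * w m) ^ (1 / p) := by
        rw [← sum_card_filter_lt (fun m => |b (f m)| ^ p * w m)]
        exact congrArg (· ^ (1 / p)) (sum_congr rfl fun j hj => by rw [hfT j hj])
    _ ≤ (∑' m, |b (f m)| ^ p * w m) ^ (1 / p) :=
        Real.rpow_le_rpow (sum_nonneg fun m _ => h_term m)
          ((summable_of_sum_le h_term (hS f hf)).sum_le_tsum _ fun m _ => h_term m)
          (one_div_pos.2 hp).le
    _ ≤ garlingNorm w p b := le_ciSup h_bdd ⟨f, hf⟩

end GarlingNorm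

section WpNorm

/-- The norm `max_{1 ≤ i ≤ k} |a_{k,i}|` of the component of `a` in the summand `ℓ_∞^k` of `W_p`. -/
noncomputable def levelMax (a : ℕ × ℕ → ℝ) (k : ℕ) : ℝ :=
  ⨆ i : {i : ℕ // 1 ≤ i ∧ i ≤ k}, |a (k, i.1)|

variable {a : ℕ × ℕ → ℝ} {k : ℕ}

instance finite_level (k : ℕ) : Finite {i : ℕ // 1 ≤ i ∧ i ≤ k} :=
  (Set.finite_Icc 1 k).to_subtype

lemma levelMax_nonneg (a : ℕ × ℕ → ℝ) (k : ℕ) : 0 ≤ levelMax a k :=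
  Real.iSup_nonneg fun _ => abs_nonneg _

lemma abs_le_levelMax {i : ℕ} (hi : 1 ≤ i) (hik : i ≤ k) : |a (k, i)| ≤ levelMax a k :=
  le_ciSup (f := fun i : {i : ℕ // 1 ≤ i ∧ i ≤ k} => |a (k, i.1)|)
    (Set.finite_range _).bddAbove ⟨i, hi, hik⟩

lemma exists_abs_eq_levelMax (a : ℕ × ℕ → ℝ) (hk : 1 ≤ k) :
    ∃ i, 1 ≤ i ∧ i ≤ k ∧ |a (k, i)| = levelMax a k := by
  have : Nonempty {i : ℕ // 1 ≤ i ∧ i ≤ k} := ⟨⟨1, le_rfl, hk⟩⟩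
  obtain ⟨⟨i, hi, hik⟩, h_eq⟩ := exists_eq_ciSup_of_finite
    (f := fun i : {i : ℕ // 1 ≤ i ∧ i ≤ k} => |a (k, i.1)|)
  exact ⟨i, hi, hik, h_eq⟩

lemma WpNorm_eq_sum {p : ℝ} (hp : p ≠ 0) {I : Finset ℕ} (hI : ∀ k i, a (k, i) ≠ 0 → k ∈ I) :
    WpNorm p a = (∑ k ∈ I, levelMax a k ^ p) ^ (1 / p) := by
  refine congrArg (· ^ (1 / p)) (tsum_eq_sum fun k hk => ?_)
  have h_zero : ∀ i, a (k, i) = 0 := fun i => by_contra fun h => hk (hI k i h)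
  simp only [h_zero, abs_zero, Real.iSup_const_zero, Real.zero_rpow hp]

end WpNorm

section Blocks

/-- The block `A_{k,i}`, `z = (k, i)`. Level `k` consists of `k` consecutive intervals of length
`n k`, and the levels follow each other without gaps. -/
def block (n : ℕ → ℕ) (z : ℕ × ℕ) : Finset ℕ :=
  Ico (∑ l ∈ range z.1, l * n l + (z.2 - 1) * n z.1) (∑ l ∈ range z.1, l * n l + z.2 * n z.1)

variable {n : ℕ → ℕ} {k i k' i' j j' : ℕ}

lemma card_block (n : ℕ → ℕ) (k : ℕ) (hi : 1 ≤ i) : #(block n (k, i)) = n k := by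
  rw [block, Nat.card_Ico, Nat.add_sub_add_left, ← Nat.sub_mul, Nat.sub_sub_self hi, one_mul]

lemma lt_of_mem_block_of_level_lt (hik : i ≤ k) (hkk' : k < k') (hj : j ∈ block n (k, i))
    (hj' : j' ∈ block n (k', i')) : j < j' := by
  calc j < ∑ l ∈ range k, l * n l + i * n k := (mem_Ico.1 hj).2
    _ ≤ ∑ l ∈ range k, l * n l + k * n k := by gcongr
    _ = ∑ l ∈ range (k + 1), l * n l := (sum_range_succ _ k).symm
    _ ≤ ∑ l ∈ range k', l * n l := sum_le_sum_of_subset (range_mono hkk')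
    _ ≤ ∑ l ∈ range k', l * n l + (i' - 1) * n k' := Nat.le_add_right _ _
    _ ≤ j' := (mem_Ico.1 hj').1

lemma lt_of_mem_block_of_index_lt (hii' : i < i') (hj : j ∈ block n (k, i))
    (hj' : j' ∈ block n (k, i')) : j < j' := by
  calc j < ∑ l ∈ range k, l * n l + i * n k := (mem_Ico.1 hj).2
    _ ≤ ∑ l ∈ range k, l * n l + (i' - 1) * n k := by gcongr; omega
    _ ≤ j' := (mem_Ico.1 hj').1

lemma disjoint_block (hik : i ≤ k) (hik' : i' ≤ k') (hne : (k, i) ≠ (k', i')) :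
    Disjoint (block n (k, i)) (block n (k', i')) := by
  refine disjoint_left.2 fun j hj hj' => ?_
  rcases lt_trichotomy k k' with hk | rfl | hk
  · exact (lt_of_mem_block_of_level_lt hik hk hj hj').false
  · rcases lt_trichotomy i i' with hi | rfl | hi
    · exact (lt_of_mem_block_of_index_lt hi hj hj').false
    · exact hne rfl
    · exact (lt_of_mem_block_of_index_lt hi hj' hj).false
  · exact (lt_of_mem_block_of_level_lt hik' hk hj' hj).false

/-- The set `A_{k,1} ∪ ⋯ ∪ A_{k,k}` of all positions that belong to level `k`. -/
def level (n : ℕ → ℕ) (k : ℕ) : Finset ℕ := (Icc 1 k).biUnion fun i => block n (k, i)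

lemma mem_level : j ∈ level n k ↔ ∃ i, (1 ≤ i ∧ i ≤ k) ∧ j ∈ block n (k, i) := by
  simp only [level, mem_biUnion, mem_Icc]

lemma card_level_le (n : ℕ → ℕ) (k : ℕ) : #(level n k) ≤ k * n k := by
  simpa only [level, Nat.card_Icc, Nat.add_sub_cancel] using
    card_biUnion_le_card_mul (Icc 1 k) (fun i => block n (k, i)) (n k) fun i hi =>
      (card_block n k (mem_Icc.1 hi).1).le

/-- `b` is the sequence `∑ a_{k,i} x_{k,i}`, where `x_{k,i}` is constant on `block n (k, i)`,
vanishes elsewhere, and is normalised in `g(w, p)`. -/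
structure IsBlockSum (w : ℕ → ℝ) (p : ℝ) (n : ℕ → ℕ) (a : ℕ × ℕ → ℝ) (b : ℕ → ℝ) : Prop where
  eq_div : ∀ k i, 1 ≤ i → i ≤ k → ∀ j ∈ block n (k, i),
    b j = a (k, i) / weightSum w (n k) ^ (1 / p)
  eq_zero : ∀ j, (∀ k i, 1 ≤ i → i ≤ k → j ∉ block n (k, i)) → b j = 0

end Blocks

namespace IsBlockSum

variable {w b : ℕ → ℝ} {p θ : ℝ} {n : ℕ → ℕ} {a : ℕ × ℕ → ℝ} {I : Finset ℕ}

lemma abs_rpow (hb : IsBlockSum w p n a b) (hp : p ≠ 0) (hw : ∀ i, 0 ≤ w i) {k i j : ℕ}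
    (hi : 1 ≤ i) (hik : i ≤ k) (hj : j ∈ block n (k, i)) :
    |b j| ^ p = |a (k, i)| ^ p / weightSum w (n k) := by
  have hW : 0 ≤ weightSum w (n k) := sum_nonneg fun i _ => hw i
  rw [hb.eq_div k i hi hik j hj, abs_div, abs_of_nonneg (Real.rpow_nonneg hW _),
    Real.div_rpow (abs_nonneg _) (Real.rpow_nonneg hW _), one_div, Real.rpow_inv_rpow hW hp]

lemma abs_rpow_le (hb : IsBlockSum w p n a b) (hp : 0 < p) (hw : ∀ i, 0 ≤ w i)
    (hI : ∀ k i, a (k, i) ≠ 0 → k ∈ I) (j : ℕ) :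
    |b j| ^ p ≤ ∑ k ∈ I with j ∈ level n k, levelMax a k ^ p / weightSum w (n k) := by
  have h_nonneg (k : ℕ) : 0 ≤ levelMax a k ^ p / weightSum w (n k) :=
    div_nonneg (Real.rpow_nonneg (levelMax_nonneg a k) p) (sum_nonneg fun i _ => hw i)
  by_cases hj : b j = 0
  · rw [hj, abs_zero, Real.zero_rpow hp.ne']
    exact sum_nonneg fun k _ => h_nonneg k
  obtain ⟨k, i, hi, hik, hjki⟩ : ∃ k i, 1 ≤ i ∧ i ≤ k ∧ j ∈ block n (k, i) := by
    by_contra! h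
    exact hj (hb.eq_zero j h)
  have hk : k ∈ I := hI k i fun h => hj (by rw [hb.eq_div k i hi hik j hjki, h, zero_div])
  calc |b j| ^ p = |a (k, i)| ^ p / weightSum w (n k) := hb.abs_rpow hp.ne' hw hi hik hjki
    _ ≤ levelMax a k ^ p / weightSum w (n k) := by
      gcongr
      · exact sum_nonneg fun i _ => hw i
      · exact abs_le_levelMax hi hik
    _ ≤ ∑ k ∈ I with j ∈ level n k, levelMax a k ^ p / weightSum w (n k) :=
      single_le_sum (f := fun k => levelMax a k ^ p / weightSum w (n k)) (fun k _ => h_nonneg k)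
        (mem_filter.2 ⟨hk, mem_level.2 ⟨i, ⟨hi, hik⟩, hjki⟩⟩)

lemma sum_comp_le (hb : IsBlockSum w p n a b) (hp : 0 < p) (hw : ∀ i, 0 < w i)
    (hanti : Antitone w) (hn : IsAdmissibleLength w θ n) (hI : ∀ k i, a (k, i) ≠ 0 → k ∈ I)
    {f : ℕ → ℕ} (hf : f.Injective) (F : Finset ℕ) :
    ∑ m ∈ F, |b (f m)| ^ p * w m ≤ θ * ∑ k ∈ I, levelMax a k ^ p := by
  have hw' (i : ℕ) : 0 ≤ w i := (hw i).le
  have hM (k : ℕ) : 0 ≤ levelMax a k ^ p := Real.rpow_nonneg (levelMax_nonneg a k) p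
  have hW (k : ℕ) : 0 < weightSum w (n k) := weightSum_pos hw (hn.pos k)
  have h_level (k : ℕ) : weightSum w #(level n k) ≤ θ * weightSum w (n k) :=
    (weightSum_mono hw' (card_level_le n k)).trans (hn.weightSum_mul_le k)
  calc ∑ m ∈ F, |b (f m)| ^ p * w m
      ≤ ∑ k ∈ I, levelMax a k ^ p / weightSum w (n k) * weightSum w #(level n k) :=
        sum_comp_mul_le hw' hanti (fun k _ => div_nonneg (hM k) (hW k).le)
          (hb.abs_rpow_le hp hw' hI) hf F
    _ ≤ ∑ k ∈ I, levelMax a k ^ p / weightSum w (n k) * (θ * weightSum w (n k)) :=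
        sum_le_sum fun k _ => mul_le_mul_of_nonneg_left (h_level k) (div_nonneg (hM k) (hW k).le)
    _ = θ * ∑ k ∈ I, levelMax a k ^ p := by
        rw [mul_sum]
        exact sum_congr rfl fun k _ => by rw [mul_left_comm, div_mul_cancel₀ _ (hW k).ne']

lemma exists_le_sum (hb : IsBlockSum w p n a b) (hp : p ≠ 0) (hw : ∀ i, 0 < w i)
    (hanti : Antitone w) (hn : IsAdmissibleLength w θ n) (hI : ∀ k ∈ I, 1 ≤ k) :
    ∃ T : Finset ℕ, ∑ k ∈ I, levelMax a k ^ p ≤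
      θ * ∑ j ∈ T, |b j| ^ p * w #{t ∈ T | t < j} := by
  choose! i hi hik hmax using fun k hk => exists_abs_eq_levelMax a (hI k hk)
  let T : ℕ → Finset ℕ := fun k => block n (k, i k)
  have hT_card : ∀ k ∈ I, #(T k) = n k := fun k hk => card_block n k (hi k hk)
  have hT_lt : ∀ k ∈ I, ∀ l ∈ I, k < l → ∀ x ∈ T k, ∀ y ∈ T l, x < y :=
    fun k hk l _ hkl x hx y hy => lt_of_mem_block_of_level_lt (hik k hk) hkl hx hy
  have hW (k : ℕ) : 0 < weightSum w (n k) := weightSum_pos hw (hn.pos k)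
  have hD (k : ℕ) : 0 ≤ levelMax a k ^ p / weightSum w (n k) :=
    div_nonneg (Real.rpow_nonneg (levelMax_nonneg a k) p) (hW k).le
  have hB : ∀ k ∈ I, ∀ j ∈ T k, |b j| ^ p = levelMax a k ^ p / weightSum w (n k) :=
    fun k hk j hj => by rw [hb.abs_rpow hp (fun i => (hw i).le) (hi k hk) (hik k hk) hj, hmax k hk]
  have h_weight : ∀ k ∈ I, weightSum w (n k) ≤
      θ * ∑ i ∈ range #(T k), w (∑ l ∈ I with l < k, #(T l) + i) := fun k hk => by
    rw [hT_card k hk, sum_congr rfl fun l hl => hT_card l (mem_filter.1 hl).1]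
    exact hn.weightSum_le_shift_filter hw hanti I k
  refine ⟨I.biUnion T, ?_⟩
  calc ∑ k ∈ I, levelMax a k ^ p
      = ∑ k ∈ I, levelMax a k ^ p / weightSum w (n k) * weightSum w (n k) :=
        sum_congr rfl fun k _ => (div_mul_cancel₀ _ (hW k).ne').symm
    _ ≤ ∑ k ∈ I, levelMax a k ^ p / weightSum w (n k) *
          (θ * ∑ i ∈ range #(T k), w (∑ l ∈ I with l < k, #(T l) + i)) :=
        sum_le_sum fun k hk => mul_le_mul_of_nonneg_left (h_weight k hk) (hD k)
    _ = θ * ∑ k ∈ I, levelMax a k ^ p / weightSum w (n k) *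
          ∑ i ∈ range #(T k), w (∑ l ∈ I with l < k, #(T l) + i) := by
        rw [mul_sum]
        exact sum_congr rfl fun k _ => mul_left_comm _ _ _
    _ ≤ θ * ∑ j ∈ I.biUnion T, |b j| ^ p * w #{t ∈ I.biUnion T | t < j} :=
        mul_le_mul_of_nonneg_left (sum_mul_sum_shift_le hanti hT_lt (fun k _ => hD k) hB)
          (hn.nonneg hw)

theorem garlingNorm_bounds {C : ℝ} (hC : 0 < C) (hb : IsBlockSum w p n a b) (hp : 0 < p)
    (hw : ∀ i, 0 < w i) (hanti : Antitone w) (hn : IsAdmissibleLength w (C ^ p) n)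
    (hfin : (Function.support a).Finite)
    (hsupp : Function.support a ⊆ {z : ℕ × ℕ | 1 ≤ z.2 ∧ z.2 ≤ z.1}) :
    C⁻¹ * WpNorm p a ≤ garlingNorm w p b ∧ garlingNorm w p b ≤ C * WpNorm p a := by
  have hw' (i : ℕ) : 0 ≤ w i := (hw i).le
  let I : Finset ℕ := hfin.toFinset.image Prod.fst
  have hI : ∀ k i, a (k, i) ≠ 0 → k ∈ I := fun k i h =>
    mem_image.2 ⟨(k, i), hfin.mem_toFinset.2 h, rfl⟩
  have hI_pos : ∀ k ∈ I, 1 ≤ k := fun k hk => by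
    obtain ⟨z, hz, rfl⟩ := mem_image.1 hk
    have hz_level := hsupp (hfin.mem_toFinset.1 hz)
    exact hz_level.1.trans hz_level.2
  have h_root (x : ℝ) (hx : 0 ≤ x) : (C ^ p * x) ^ (1 / p) = C * x ^ (1 / p) := by
    rw [Real.mul_rpow (Real.rpow_nonneg hC.le p) hx, one_div, Real.rpow_rpow_inv hC.le hp.ne']
  have h_upper := fun (f : ℕ → ℕ) (hf : StrictMono f) (F : Finset ℕ) =>
    hb.sum_comp_le hp hw hanti hn hI hf.injective F
  have hM : 0 ≤ ∑ k ∈ I, levelMax a k ^ p :=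
    sum_nonneg fun k _ => Real.rpow_nonneg (levelMax_nonneg a k) p
  obtain ⟨T, hT⟩ := hb.exists_le_sum hp.ne' hw hanti hn hI_pos
  rw [WpNorm_eq_sum hp.ne' hI, inv_mul_le_iff₀ hC]
  constructor
  · calc (∑ k ∈ I, levelMax a k ^ p) ^ (1 / p)
        ≤ (C ^ p * ∑ j ∈ T, |b j| ^ p * w #{t ∈ T | t < j}) ^ (1 / p) :=
          Real.rpow_le_rpow hM hT (one_div_pos.2 hp).le
      _ = C * (∑ j ∈ T, |b j| ^ p * w #{t ∈ T | t < j}) ^ (1 / p) :=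
          h_root _ (sum_nonneg fun j _ => mul_nonneg (Real.rpow_nonneg (abs_nonneg _) p) (hw' _))
      _ ≤ C * garlingNorm w p b := by
          gcongr
          exact rpow_sum_le_garlingNorm hp hw' h_upper T
  · calc garlingNorm w p b ≤ (C ^ p * ∑ k ∈ I, levelMax a k ^ p) ^ (1 / p) :=
          garlingNorm_le_rpow hp hw' h_upper
      _ = C * (∑ k ∈ I, levelMax a k ^ p) ^ (1 / p) := h_root _ hM

end IsBlockSum

theorem stmt_3_general (p : ℝ) (hp : 0 < p)
    (w : ℕ → ℝ) (hw_pos : ∀ i, 0 < w i) (hw_anti : Antitone w) (hw_nonsum : ¬ Summable w)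
    (hw_nuc : (⨅ n : ℕ, (∑ i ∈ range (2 * (n + 1)), w i) / (∑ i ∈ range (n + 1), w i)) = 1)
    (C : ℝ) (hC : 1 < C) :
    ∃ (A : ℕ × ℕ → Finset ℕ) (c : ℕ → ℝ),
      (∀ k i : ℕ, 1 ≤ i → i ≤ k → (A (k, i)).Nonempty) ∧
      (∀ k i k' i' : ℕ, 1 ≤ i → i ≤ k → 1 ≤ i' → i' ≤ k' → (k, i) ≠ (k', i') →
        Disjoint (A (k, i)) (A (k', i'))) ∧
      (∀ k : ℕ, 1 ≤ k → 0 < c k) ∧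
      ∀ a : ℕ × ℕ → ℝ, (Function.support a).Finite →
        (Function.support a ⊆ {z : ℕ × ℕ | 1 ≤ z.2 ∧ z.2 ≤ z.1}) →
        ∀ b : ℕ → ℝ,
          (∀ k i : ℕ, 1 ≤ i → i ≤ k → ∀ j ∈ A (k, i), b j = a (k, i) / c k) →
          (∀ j : ℕ, (∀ k i : ℕ, 1 ≤ i → i ≤ k → j ∉ A (k, i)) → b j = 0) →
          C⁻¹ * WpNorm p a ≤ garlingNorm w p b ∧ garlingNorm w p b ≤ C * WpNorm p a := by
  obtain ⟨n, hn⟩ :=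
    exists_isAdmissibleLength hw_pos hw_anti hw_nonsum hw_nuc (Real.one_lt_rpow hC hp)
  refine ⟨block n, fun k => weightSum w (n k) ^ (1 / p), fun k i hi _ => ?_,
    fun k i k' i' _ hik _ hik' hne => disjoint_block hik hik' hne,
    fun k _ => Real.rpow_pos_of_pos (weightSum_pos hw_pos (hn.pos k)) _,
    fun a hfin hsupp b hb hb0 => IsBlockSum.garlingNorm_bounds (zero_lt_one.trans hC) ⟨hb, hb0⟩
      hp hw_pos hw_anti hn hfin hsupp⟩
  rw [← card_pos, card_block n k hi]
  exact hn.pos k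

/-- Let `1 ≤ p < ∞` and let `w ∈ 𝒲` (a positive, nonincreasing null weight
with `w_1 = 1`, not summable; `0`-indexed, so `w 0` is the paper's `w_1`) satisfy
condition (NUC): `inf_{n ≥ 1} (∑_{i=1}^{2n} w_i)/(∑_{i=1}^n w_i) = 1`.  Then there exist
`C ≥ 1`, pairwise disjoint nonempty finite sets `A_{k,i} ⊂ ℕ` (`k ≥ 1`, `1 ≤ i ≤ k`) and
positive reals `c_k` such that for every finitely supported family `(a_{k,i})`, any
sequence `b` with `b_j = a_{k,i}/c_k` for `j ∈ A_{k,i}` and `b_j = 0` otherwise satisfies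
`C⁻¹ (∑_k max_{1≤i≤k} |a_{k,i}|^p)^{1/p} ≤ ‖b‖_{g(w,p)} ≤ C (∑_k max_{1≤i≤k} |a_{k,i}|^p)^{1/p}`.
That is, the Garling space `g(w,p)` contains a constant-coefficient block-basic copy of
`W_p = (⊕_{k=1}^∞ ℓ_∞^k)_{ℓ_p}`. -/
theorem stmt_3 (p : ℝ) (hp : 1 ≤ p)
    (w : ℕ → ℝ) (hw_pos : ∀ i, 0 < w i) (hw_one : w 0 = 1) (hw_anti : Antitone w)
    (hw_null : Filter.Tendsto w Filter.atTop (nhds 0)) (hw_nonsum : ¬ Summable w)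
    (hw_nuc : (⨅ n : ℕ, (∑ i ∈ Finset.range (2 * (n + 1)), w i) /
      (∑ i ∈ Finset.range (n + 1), w i)) = 1) :
    ∃ (C : ℝ) (A : ℕ × ℕ → Finset ℕ) (c : ℕ → ℝ), 1 ≤ C ∧
      (∀ k i : ℕ, 1 ≤ i → i ≤ k → (A (k, i)).Nonempty) ∧
      (∀ k i k' i' : ℕ, 1 ≤ i → i ≤ k → 1 ≤ i' → i' ≤ k' → (k, i) ≠ (k', i') →
        Disjoint (A (k, i)) (A (k', i'))) ∧
      (∀ k : ℕ, 1 ≤ k → 0 < c k) ∧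
      ∀ a : ℕ × ℕ → ℝ, (Function.support a).Finite →
        (Function.support a ⊆ {z : ℕ × ℕ | 1 ≤ z.2 ∧ z.2 ≤ z.1}) →
        ∀ b : ℕ → ℝ,
          (∀ k i : ℕ, 1 ≤ i → i ≤ k → ∀ j ∈ A (k, i), b j = a (k, i) / c k) →
          (∀ j : ℕ, (∀ k i : ℕ, 1 ≤ i → i ≤ k → j ∉ A (k, i)) → b j = 0) →
          C⁻¹ * WpNorm p a ≤ garlingNorm w p b ∧ garlingNorm w p b ≤ C * WpNorm p a := by
  obtain ⟨A, c, h⟩ := stmt_3_general p (zero_lt_one.trans_le hp) w hw_pos hw_anti hw_nonsum hw_nuc 2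
    one_lt_two
  exact ⟨2, A, c, one_le_two, h⟩
end

section
/- Let 1 ≤ p < ∞ and let E = (⊕_{n=1}^∞ c_0)_{ℓ_p} be the ℓ_p-direct sum of countably many copies of c_0 (the space of real sequences converging to 0, with the supremum norm). For each k ≥ 1 define x_k ∈ E to be the vector whose n-th block, for 1 ≤ n ≤ k, equals k^{-1/p}e_k (i.e., has entry k^{-1/p} in coordinate k and 0 elsewhere), and whose n-th block is 0 for n > k. Then for every finitely supported real sequence (a_k)_{k≥1}: ‖∑_{k=1}^∞ a_k x_k‖_E = (∑_{n=1}^∞ sup_{j≥n} |a_j|^p/j)^{1/p}. Hence the map f_k ↦ x_k, where (f_k) is the canonical normalized basis of the p-th Tandori sequence space, is an isometric embedding of tand(p) into ℓ_p(c_0). -/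
/-!
Coordinate `j` of the vectors `x_k` is nonzero only for `k = j`, so block `n ≥ 1` of
`∑ k, a_k x_k` is the sequence `(a_j j^{-1/p})_j` cut off below `j = n`. Its sup norm to the power
`p` is `sup_{j ≥ n} |a_j|^p / j`, and summing over the blocks gives the Tandori norm.
-/

/-- The element of `c_0` (real sequences vanishing at infinity, modelled as
`ZeroAtInftyContinuousMap ℕ ℝ` with the supremum norm) having value `c` in coordinate `k`
and `0` elsewhere. -/
noncomputable def c0single (k : ℕ) (c : ℝ) : ZeroAtInftyContinuousMap ℕ ℝ where
  toFun := fun j => if j = k then c else 0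
  continuous_toFun := continuous_of_discreteTopology
  zero_at_infty' := by
    rw [Filter.cocompact_eq_cofinite]
    apply Filter.Tendsto.congr' _ tendsto_const_nhds
    rw [Filter.eventuallyEq_iff_exists_mem]
    exact ⟨{k}ᶜ, by simp [Filter.mem_cofinite],
      fun j hj => by simp only [Set.mem_compl_iff, Set.mem_singleton_iff] at hj; simp [hj]⟩

/-- The vector `x_k ∈ E = (⊕_{n=1}^∞ c_0)_{ℓ_p}` whose `n`-th block, for `1 ≤ n ≤ k`,
equals `k^{-1/p} e_k`, and whose other blocks vanish.  (Blocks are indexed by `n : ℕ`,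
with block `0` permanently zero, so that blocks `1, 2, 3, …` are the paper's blocks;
`x_0 = 0` is a dummy value.) -/
noncomputable def tandoriVec (p : ℝ) (k : ℕ) :
    lp (fun _ : ℕ => ZeroAtInftyContinuousMap ℕ ℝ) (ENNReal.ofReal p) :=
  ∑ n ∈ Finset.Icc 1 k, lp.single (ENNReal.ofReal p) n (c0single k ((k : ℝ) ^ (-(1 / p))))

open scoped ZeroAtInfty

section ZeroAtInfty

variable {α β : Type*} [TopologicalSpace α] [SeminormedAddCommGroup β]

lemma c0_norm_apply_le (f : C₀(α, β)) (x : α) : ‖f x‖ ≤ ‖f‖ :=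
  f.toBCF.norm_coe_le_norm x

lemma c0_norm_le_iff (f : C₀(α, β)) {C : ℝ} (hC : 0 ≤ C) : ‖f‖ ≤ C ↔ ∀ x, ‖f x‖ ≤ C :=
  BoundedContinuousFunction.norm_le (f := f.toBCF) hC

lemma c0_norm_rpow_eq_iSup_of_eq_zero {p : ℝ} (hp : 0 < p) (f : C₀(α, β)) {P : α → Prop}
    (hf : ∀ x, ¬ P x → f x = 0) : ‖f‖ ^ p = ⨆ x : {x // P x}, ‖f x‖ ^ p := by
  have le_norm (x : {x // P x}) : ‖f x‖ ^ p ≤ ‖f‖ ^ p :=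
    Real.rpow_le_rpow (norm_nonneg _) (c0_norm_apply_le f x) hp.le
  have iSup_nonneg : 0 ≤ ⨆ x : {x // P x}, ‖f x‖ ^ p := Real.iSup_nonneg fun _ ↦ by positivity
  refine le_antisymm ?_ (Real.iSup_le le_norm (by positivity))
  rw [← Real.le_rpow_inv_iff_of_pos (norm_nonneg f) iSup_nonneg hp,
    c0_norm_le_iff f (Real.rpow_nonneg iSup_nonneg _)]
  intro x
  rw [Real.le_rpow_inv_iff_of_pos (norm_nonneg _) iSup_nonneg hp]
  by_cases hx : P x
  · exact le_ciSup (f := fun x : {x // P x} ↦ ‖f x‖ ^ p)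
      ⟨‖f‖ ^ p, Set.forall_mem_range.2 le_norm⟩ ⟨x, hx⟩
  · simpa only [hf x hx, norm_zero, Real.zero_rpow hp.ne'] using iSup_nonneg

lemma hasSum_c0_apply {ι : Type*} {f : ι → C₀(α, β)} {g : C₀(α, β)} (hf : HasSum f g) (x : α) :
    HasSum (fun i ↦ f i x) (g x) :=
  let evalAt : C₀(α, β) →+ β := ⟨⟨fun h ↦ h x, rfl⟩, fun _ _ ↦ rfl⟩
  hf.map evalAt ((continuous_eval_const (F := BoundedContinuousFunction α β) x).comp
    ZeroAtInftyContinuousMap.isometry_toBCF.continuous)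

end ZeroAtInfty

lemma lp_norm_eq_tsum_succ_rpow {E : ℕ → Type*} [∀ n, NormedAddCommGroup (E n)] {q : ENNReal}
    (hq : 0 < q.toReal) (y : lp E q) (hy : y 0 = 0) :
    ‖y‖ = (∑' n, ‖y (n + 1)‖ ^ q.toReal) ^ (1 / q.toReal) := by
  rw [lp.norm_eq_tsum_rpow hq, ((lp.memℓp y).summable hq).tsum_eq_zero_add, hy, norm_zero,
    Real.zero_rpow hq.ne', zero_add]

lemma norm_mul_rpow_neg_one_div_rpow {p x : ℝ} (hp : p ≠ 0) (hx : 0 ≤ x) (c : ℝ) :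
    ‖c * x ^ (-(1 / p))‖ ^ p = |c| ^ p / x := by
  have hpow : 0 ≤ x ^ (-(1 / p)) := Real.rpow_nonneg hx _
  have hexp : -(1 / p) * p = -1 := by field_simp
  rw [Real.norm_eq_abs, abs_mul, abs_of_nonneg hpow, Real.mul_rpow (abs_nonneg c) hpow,
    ← Real.rpow_mul hx, hexp, Real.rpow_neg_one, div_eq_mul_inv]

section TandoriVec

lemma tandoriVec_block (p : ℝ) (k n : ℕ) :
    tandoriVec p k n = if n ∈ Finset.Icc 1 k then c0single k ((k : ℝ) ^ (-(1 / p))) else 0 := by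
  simp only [tandoriVec, lp.coeFn_sum, Finset.sum_apply, lp.single_apply, Pi.single_apply,
    Finset.sum_ite_eq]

lemma tandoriVec_apply_self (p : ℝ) (j n : ℕ) :
    tandoriVec p j n j = if n ∈ Finset.Icc 1 j then (j : ℝ) ^ (-(1 / p)) else 0 := by
  rw [tandoriVec_block, apply_ite (fun f : C₀(ℕ, ℝ) ↦ f j)]
  exact if_congr Iff.rfl (if_pos rfl) rfl

lemma tandoriVec_apply_of_ne (p : ℝ) {k j : ℕ} (hjk : j ≠ k) (n : ℕ) :
    tandoriVec p k n j = 0 := by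
  rw [tandoriVec_block]
  split_ifs
  exacts [if_neg hjk, rfl]

variable {p : ℝ} [Fact (1 ≤ ENNReal.ofReal p)] {a : ℕ → ℝ}
  {y : lp (fun _ : ℕ ↦ C₀(ℕ, ℝ)) (ENNReal.ofReal p)}

lemma apply_eq_of_hasSum_smul_tandoriVec (hy : HasSum (fun k ↦ a k • tandoriVec p k) y)
    (n j : ℕ) :
    y n j = if n ∈ Finset.Icc 1 j then a j * (j : ℝ) ^ (-(1 / p)) else 0 := by
  have hcoord : HasSum (fun k ↦ a k * tandoriVec p k n j) (y n j) :=
    hasSum_c0_apply (hy.mapL (lp.evalCLM ℝ (fun _ : ℕ ↦ C₀(ℕ, ℝ)) (ENNReal.ofReal p) n)) j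
  have hoff (k : ℕ) (hkj : k ≠ j) : a k * tandoriVec p k n j = 0 := by
    rw [tandoriVec_apply_of_ne p hkj.symm, mul_zero]
  rw [hcoord.unique (hasSum_single j hoff), tandoriVec_apply_self, mul_ite, mul_zero]

lemma norm_block_rpow_of_hasSum_smul_tandoriVec (hp : 0 < p)
    (hy : HasSum (fun k ↦ a k • tandoriVec p k) y) (n : ℕ) :
    ‖y (n + 1)‖ ^ p = ⨆ j : {j : ℕ // n + 1 ≤ j}, |a j.1| ^ p / (j.1 : ℝ) := by
  have happly (j : ℕ) :
      y (n + 1) j = if n + 1 ≤ j then a j * (j : ℝ) ^ (-(1 / p)) else 0 := by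
    simpa using apply_eq_of_hasSum_smul_tandoriVec hy (n + 1) j
  rw [c0_norm_rpow_eq_iSup_of_eq_zero hp (y (n + 1)) (P := (n + 1 ≤ ·))
    fun j hj ↦ (happly j).trans (if_neg hj)]
  refine iSup_congr fun j ↦ ?_
  rw [happly, if_pos j.2, norm_mul_rpow_neg_one_div_rpow hp.ne' j.1.cast_nonneg]

end TandoriVec

theorem stmt_7_general (p : ℝ) [Fact (1 ≤ ENNReal.ofReal p)] (a : ℕ → ℝ)
    (ha : Summable fun k ↦ a k • tandoriVec p k) :
    ‖∑' k : ℕ, a k • tandoriVec p k‖ =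
      (∑' n : ℕ, ⨆ j : {j : ℕ // n + 1 ≤ j}, |a j.1| ^ p / (j.1 : ℝ)) ^ (1 / p) := by
  have hp : 0 < p := ENNReal.ofReal_pos.1 (zero_lt_one.trans_le Fact.out)
  have htoReal : (ENNReal.ofReal p).toReal = p := ENNReal.toReal_ofReal hp.le
  have hblock_zero : (∑' k, a k • tandoriVec p k) 0 = 0 := by
    ext j
    simpa using apply_eq_of_hasSum_smul_tandoriVec ha.hasSum 0 j
  rw [lp_norm_eq_tsum_succ_rpow (htoReal.symm ▸ hp) _ hblock_zero, htoReal]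
  simp only [norm_block_rpow_of_hasSum_smul_tandoriVec hp ha.hasSum]

/-- Let `1 ≤ p < ∞` and let `E = (⊕_{n=1}^∞ c_0)_{ℓ_p}`.  For `k ≥ 1` let
`x_k ∈ E` be the vector whose `n`-th block, for `1 ≤ n ≤ k`, equals `k^{-1/p} e_k`, and
whose other blocks vanish.  Then for every finitely supported real sequence `(a_k)_{k≥1}`:
`‖∑_k a_k x_k‖_E = (∑_{n=1}^∞ sup_{j ≥ n} |a_j|^p / j)^{1/p}`.
Hence `f_k ↦ x_k`, where `(f_k)` is the canonical normalized basis of the `p`-th Tandori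
sequence space, is an isometric embedding of `tand(p)` into `ℓ_p(c_0)`. -/
theorem stmt_7 (p : ℝ) (hp : 1 ≤ p) [Fact (1 ≤ ENNReal.ofReal p)]
    (a : ℕ → ℝ) (ha : (Function.support a).Finite) :
    ‖∑' k : ℕ, a k • tandoriVec p k‖ =
      (∑' n : ℕ, ⨆ j : {j : ℕ // n + 1 ≤ j}, |a j.1| ^ p / (j.1 : ℝ)) ^ (1 / p) := by
  exact stmt_7_general p a (summable_of_hasFiniteSupport
    (ha.subset (Function.support_smul_subset_left a _)))
end
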